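/- arXiv:1611.09730 — 3 statements merged into one kernel-verified Lean document; each statement's English description precedes it below -/
import Mathlib

section
/- Let R = R(A, α, u − α(u), 1) be a conformal ambiskew polynomial ring with u a central element of A not in K and A a domain such that the skew Laurent polynomial ring A[y^{±1}; α] is simple and its centre equals K; let z = xy − u be the Casimir element. Let λ ∈ K and suppose there exists m ≥ 1 such that the ideal (u + λ)A + α^m(u + λ)A is a maximal two-sided ideal of A, while (u + λ)A + α^n(u + λ)A = A for all positive integers n ≠ m. Then the ring R/(z − λ)R has exactly one nonzero prime two-sided ideal. -/
/-!
Write `v = u + λ`. The quotient `W = R/(z − λ)R` is the generalized Weyl algebra `W(A, α, v)`: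
`XY = v`, `YX = α(v)`, and the powers of `X` and `Y` form an `A`-basis
(`IsAmbiskew.isGWA_quotient`). The proof shows that `W` has exactly one nonzero proper ideal `J(M)`,
where `M = vA + α^m(v)A`; being the largest proper ideal, `J(M)` is prime.

* Inverting `Y` turns `W` into the simple ring `A[y^{±1}; α]`, so a nonzero ideal `P` contains some
  `Y^N` (`IsGWA.exists_Ypow_mem`). With `Y^N` it contains `X Y^N = v Y^(N-1)` and
  `Y^N X = α^N(v) Y^(N-1)`, hence `Y^(N-1)` if `N ≠ m`, since then `v` and `α^N(v)` generate the
  unit ideal. So a proper nonzero `P` contains `Y^m` (`IsGWA.Ypow_descent`). The exchange of `X` and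
  `Y` (which replaces `α`, `v`, `M` by `α⁻¹`, `α(v)`, `α^(1-m)(M)`) yields `X^m ∈ P`.
* Lowering degrees further in the same way, `P` contains every `a·Y^i` and `a·X^i` with `a` in the
  intersection of suitable `α^(-ℓ)(M)`, `0 ≤ ℓ < m` (`IsGWA.J_le`). These elements span an ideal
  `J(M)`, which is nonzero and proper (`IsGWA.JIdeal`).
* The ideals `α^(-ℓ)(M)`, `0 ≤ ℓ < m`, are maximal and pairwise comaximal, and `W/J(M)` behaves like
  an `m × m` matrix ring whose diagonal blocks are the simple rings `A/α^(-ℓ)(M)`. Diagonal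
  idempotents isolate one homogeneous entry of an element of `P` outside `J(M)`; moving it to degree
  zero and then along the diagonal multiplies it by elements `α^n(v)`, `0 < n < m`, that are
  invertible modulo `M`. Hence `P ⊄ J(M)` forces `P = W` (`IsGWA.le_JIdeal`).
-/

noncomputable section

/-- The "monomial" of degree `i` in a generalized Weyl algebra: `Y^i` for `i ≥ 0`
and `X^(-i)` for `i < 0`. -/
def gwaMon {W : Type*} [Monoid W] (X Y : W) : ℤ → W :=
  fun i => if 0 ≤ i then Y ^ i.toNat else X ^ (-i).toNat

/-- `W` is a generalized Weyl algebra `W(A, α, u)` with respect to the embedding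
`ι : A →+* W` and the elements `X, Y`: the defining relations hold and `W` is free as
a left `A`-module with basis `{X^i : i ≥ 1} ∪ {1} ∪ {Y^i : i ≥ 1}`. -/
structure IsGWA {A W : Type*} [Ring A] [Ring W]
    (α : A ≃+* A) (u : A) (ι : A →+* W) (X Y : W) : Prop where
  central : ∀ a : A, u * a = a * u
  YX : Y * X = ι (α u)
  XY : X * Y = ι u
  Ya : ∀ a : A, Y * ι a = ι (α a) * Y
  Xa : ∀ a : A, X * ι a = ι (α.symm a) * X
  free : Function.Bijective
    (fun f : ℤ →₀ A => f.sum fun i a => ι a * gwaMon X Y i)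

/-- `R` is the conformal ambiskew polynomial ring `R(A, α, u − α(u), 1)` with respect to
the embedding `ι : A →ₐ[K] R` and the elements `x, y`: the defining relations hold and
`R` is free as a left `A`-module with basis `{yⁱxʲ : i, j ≥ 0}`. -/
structure IsAmbiskew {K A R : Type*} [Field K] [Ring A] [Algebra K A] [Ring R] [Algebra K R]
    (α : A ≃ₐ[K] A) (u : A) (ι : A →ₐ[K] R) (x y : R) : Prop where
  ucentral : ∀ a : A, u * a = a * u
  ya : ∀ a : A, y * ι a = ι (α a) * y
  xa : ∀ a : A, x * ι a = ι (α.symm a) * x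
  xy : x * y = y * x + ι (u - α u)
  free : Function.Bijective
    (fun f : ℕ × ℕ →₀ A => f.sum fun p a => ι a * (y ^ p.1 * x ^ p.2))

/-- `S` is the skew Laurent polynomial ring `A[y^{±1}; α]` with respect to the embedding
`ι : A →ₐ[K] S` and the invertible element `Y`: `Y·a = α(a)·Y` and `S` is free as a left
`A`-module with basis `{Yⁱ : i ∈ ℤ}`. -/
structure IsSkewLaurent {K A S : Type*} [Field K] [Ring A] [Algebra K A] [Ring S] [Algebra K S]
    (α : A ≃ₐ[K] A) (ι : A →ₐ[K] S) (Y : Sˣ) : Prop where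
  comm : ∀ a : A, (Y : S) * ι a = ι (α a) * (Y : S)
  free : Function.Bijective
    (fun f : ℤ →₀ A => f.sum fun i a => ι a * ((Y ^ i : Sˣ) : S))

/-- `φ : R →+* C` exhibits `C` as the localization of `R` at the multiplicative set `Z`
of central elements: each element of `Z` is central and becomes a unit, every element of
`C` is a fraction, and the kernel of `φ` is the set of elements annihilated by `Z`. -/
structure IsCentralLocalization {R C : Type*} [Ring R] [Ring C] (Z : Set R) (φ : R →+* C) : Prop where
  central : ∀ s ∈ Z, ∀ r : R, s * r = r * s
  isUnit : ∀ s ∈ Z, IsUnit (φ s)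
  surj : ∀ c : C, ∃ r : R, ∃ s ∈ Z, c * φ s = φ r
  ker : ∀ r : R, φ r = 0 ↔ ∃ s ∈ Z, r * s = 0

/-- A two-sided ideal `P` is prime: it is proper and whenever the product of two two-sided
ideals lies in `P`, one of them lies in `P`. -/
def IsPrimeTwoSided {C : Type*} [Ring C] (P : TwoSidedIdeal C) : Prop :=
  P ≠ ⊤ ∧ ∀ I J : TwoSidedIdeal C, (∀ a ∈ I, ∀ b ∈ J, a * b ∈ P) → I ≤ P ∨ J ≤ P

/-- A two-sided ideal `M` is maximal: proper and maximal among proper two-sided ideals. -/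
def IsMaximalTwoSided {C : Type*} [Ring C] (M : TwoSidedIdeal C) : Prop :=
  M ≠ ⊤ ∧ ∀ T : TwoSidedIdeal C, M < T → T = ⊤

/-- Evaluation of a (commutative) multivariate polynomial over `K` at a family of
(pairwise commuting, central) elements of a possibly noncommutative `K`-algebra. -/
def mvEval {K A : Type*} [CommSemiring K] [Ring A] [Algebra K A] {n : ℕ}
    (v : Fin n → A) (p : MvPolynomial (Fin n) K) : A :=
  p.support.sum fun d => algebraMap K A (MvPolynomial.coeff d p) *
    ((List.finRange n).map fun i => v i ^ d i).prod

/-- The components of the graded ideal `J(I)` of a generalized Weyl algebra: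
`I_i = I_{-i} = A` for `i ≥ m`, `I_i = ∩_{ℓ=0}^{m−1−i} α^{−ℓ}(I)` for `0 ≤ i ≤ m−1`, and
`I_{−i} = ∩_{ℓ=i}^{m−1} α^{−ℓ}(I)` for `0 ≤ i ≤ m−1`. -/
def Jcomp {A : Type*} [Ring A] (α : A ≃+* A) (I : Set A) (m : ℕ) : ℤ → Set A :=
  fun d => if m ≤ d.natAbs then Set.univ
    else if 0 ≤ d then ⋂ ℓ ∈ Finset.range (m - d.natAbs), (⇑α.symm)^[ℓ] '' I
    else ⋂ ℓ ∈ Finset.Icc d.natAbs (m - 1), (⇑α.symm)^[ℓ] '' I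

/-- The subset of a generalized Weyl algebra consisting of all elements whose (unique)
graded components of each degree `d` have coefficients in the prescribed set `comp d`. -/
def gwaGradedSet {A W : Type*} [Ring A] [Ring W] (ι : A →+* W) (X Y : W)
    (comp : ℤ → Set A) : Set W :=
  {w | ∃ f : ℤ →₀ A, (∀ d, f d ∈ comp d) ∧ w = f.sum fun d a => ι a * gwaMon X Y d}

/-- The set `Au + Aα^m(u)` in `A`. -/
def genSet2 {A : Type*} [Ring A] (x y : A) : Set A :=
  {a : A | ∃ b c : A, a = b * x + c * y}

/-- The product of two sets in a ring, closed under finite sums: for two-sided ideals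
this is the usual ideal product. -/
def setMulSum {A : Type*} [Ring A] (S T : Set A) : Set A :=
  {x | ∃ (n : ℕ) (f g : Fin n → A), (∀ i, f i ∈ S ∧ g i ∈ T) ∧ x = ∑ i, f i * g i}

/-- The (right-nested) product of a list of sets in a ring; the empty product is `A`. -/
def listProdSet {A : Type*} [Ring A] (l : List (Set A)) : Set A :=
  l.foldr setMulSum Set.univ

/-- The element `d_i = α(u)·α²(u)⋯αⁱ(u)`. -/
def dElt {A : Type*} [Ring A] (α : A ≃+* A) (u : A) (i : ℕ) : A :=
  ((List.range i).map fun s => (⇑α)^[s + 1] u).prod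

/-- The element `e_i = α^{−i}(d_i) = u·α^{−1}(u)⋯α^{1−i}(u)`. -/
def eElt {A : Type*} [Ring A] (α : A ≃+* A) (u : A) (i : ℕ) : A :=
  (⇑α.symm)^[i] (dElt α u i)

/-- Product of two two-sided ideals. -/
def tsiMul {R : Type*} [Ring R] (I J : TwoSidedIdeal R) : TwoSidedIdeal R :=
  TwoSidedIdeal.span {x | ∃ a ∈ I, ∃ b ∈ J, x = a * b}

/-- The (right-nested) product of a list of two-sided ideals; the empty product is `R`. -/
def tsiListProd {R : Type*} [Ring R] (l : List (TwoSidedIdeal R)) : TwoSidedIdeal R :=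
  l.foldr tsiMul ⊤

/-- A subset of a ring is a right ideal. -/
def IsRightIdealSet {Q : Type*} [Ring Q] (S : Set Q) : Prop :=
  (0 : Q) ∈ S ∧ (∀ a ∈ S, ∀ b ∈ S, a + b ∈ S) ∧ (∀ a ∈ S, -a ∈ S) ∧
    (∀ a ∈ S, ∀ q : Q, a * q ∈ S)

/-- A right ideal is uniform: it is nonzero and any two nonzero elements generate right
ideals with nonzero intersection (equivalently, any two nonzero submodules intersect
nontrivially). -/
def IsUniformRightIdealSet {Q : Type*} [Ring Q] (S : Set Q) : Prop :=
  (∃ a ∈ S, a ≠ 0) ∧ ∀ a ∈ S, a ≠ 0 → ∀ b ∈ S, b ≠ 0 →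
    ∃ q₁ q₂ : Q, a * q₁ = b * q₂ ∧ a * q₁ ≠ 0

/-! ### Powers of the twisting automorphism -/

/-- The power `α^k` of an automorphism of `A`, for `k : ℤ`, as an automorphism of `A`. -/
def tw {A : Type*} [Ring A] (α : A ≃+* A) (k : ℤ) : A ≃+* A := ((α : RingAut A) ^ k : RingAut A)

section Twist
variable {A : Type*} [Ring A] (α : A ≃+* A)

@[simp] lemma tw_zero (a : A) : tw α 0 a = a := by simp [tw]

@[simp] lemma tw_tw (k l : ℤ) (a : A) : tw α k (tw α l a) = tw α (k + l) a := by
  unfold tw; rw [zpow_add]; rfl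

lemma tw_one (a : A) : tw α 1 a = α a := by simp [tw]

lemma tw_neg_one (a : A) : tw α (-1) a = α.symm a := by
  unfold tw; rw [zpow_neg_one]; rfl

lemma tw_symm (k : ℤ) (a : A) : tw α.symm k a = tw α (-k) a := by
  unfold tw; rw [zpow_neg, ← inv_zpow]; rfl

lemma tw_natCast (n : ℕ) (a : A) : tw α n a = (⇑α)^[n] a := by
  induction n with
  | zero => simp
  | succ n ih => rw [Function.iterate_succ_apply', ← ih, ← tw_one α, tw_tw]; congr 2; push_cast; ring

lemma tw_central {v : A} (hv : ∀ a, v * a = a * v) (k : ℤ) (a : A) :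
    tw α k v * a = a * tw α k v := by
  have := congrArg (tw α k) (hv (tw α (-k) a))
  simpa using this

end Twist

/-! ### Normal forms in a generalized Weyl algebra -/

section GWA
variable {A W : Type*} [Ring A] [Ring W] {α : A ≃+* A} {v : A} {ι : A →+* W} {X Y : W}

@[simp] lemma gwaMon_natCast (X Y : W) (n : ℕ) : gwaMon X Y (n : ℤ) = Y ^ n := by simp [gwaMon]

@[simp] lemma gwaMon_neg_natCast (X Y : W) (n : ℕ) : gwaMon X Y (-(n : ℤ)) = X ^ n := by
  rcases n with _ | n
  · simp [gwaMon]
  · have : ¬ (0 : ℤ) ≤ -((n + 1 : ℕ) : ℤ) := by omega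
    simp only [gwaMon, this, if_false, neg_neg, Int.toNat_natCast]

lemma gwaMon_swap (X Y : W) (i : ℤ) : gwaMon Y X i = gwaMon X Y (-i) := by
  obtain ⟨n, rfl | rfl⟩ := i.eq_nat_or_neg <;> simp

/-- The element `∑ aᵢ·monᵢ` with prescribed coefficients, additively in the coefficients. -/
def gwaEv (ι : A →+* W) (X Y : W) : (ℤ →₀ A) →+ W :=
  Finsupp.liftAddHom fun i => (AddMonoidHom.mulRight (gwaMon X Y i)).comp ι.toAddMonoidHom

lemma gwaEv_apply (f : ℤ →₀ A) : gwaEv ι X Y f = f.sum fun i a => ι a * gwaMon X Y i := rfl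

@[simp] lemma gwaEv_single (i : ℤ) (a : A) :
    gwaEv ι X Y (Finsupp.single i a) = ι a * gwaMon X Y i := by
  simp [gwaEv]

namespace IsGWA
variable (h : IsGWA α v ι X Y)
include h

lemma ev_bij : Function.Bijective (gwaEv ι X Y) := h.free

/-- Exchanging the two generators gives a generalized Weyl algebra for `α⁻¹` and `α(v)`. -/
lemma swap : IsGWA α.symm (α v) ι Y X where
  central a := by simpa [tw_one] using tw_central α h.central 1 a
  YX := by simpa using h.XY
  XY := h.YX
  Ya := h.Xa
  Xa := by simpa using h.Ya
  free := by
    have e : (fun f : ℤ →₀ A => f.sum fun i a => ι a * gwaMon Y X i) =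
        gwaEv ι X Y ∘ Finsupp.equivMapDomain (Equiv.neg ℤ) := by
      funext f
      induction f using Finsupp.induction_linear with
      | zero => simp [Finsupp.equivMapDomain_zero]
      | add f g hf hg =>
        have e2 : Finsupp.equivMapDomain (Equiv.neg ℤ) (f + g) =
          Finsupp.equivMapDomain (Equiv.neg ℤ) f + Finsupp.equivMapDomain (Equiv.neg ℤ) g := by
          ext; simp
        simp only [Function.comp_apply] at hf hg ⊢
        rw [e2, map_add, ← hf, ← hg]
        exact map_add (gwaEv ι Y X) f g
      | single i a =>
        simp [Finsupp.equivMapDomain_single, gwaMon_swap X Y]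
    rw [e]
    exact h.ev_bij.comp (Finsupp.equivCongrLeft (Equiv.neg ℤ)).bijective

lemma Ypow_a (n : ℕ) (a : A) : Y ^ n * ι a = ι (tw α n a) * Y ^ n := by
  induction n generalizing a with
  | zero => simp
  | succ n ih =>
    rw [pow_succ, mul_assoc, h.Ya, ← mul_assoc, ih, mul_assoc, ← tw_one α, tw_tw]
    push_cast; rfl

lemma Xpow_a (n : ℕ) (a : A) : X ^ n * ι a = ι (tw α (-n) a) * X ^ n := by
  simpa [tw_symm] using h.swap.Ypow_a n a

lemma mon_a (i : ℤ) (a : A) : gwaMon X Y i * ι a = ι (tw α i a) * gwaMon X Y i := by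
  obtain ⟨n, rfl | rfl⟩ := i.eq_nat_or_neg
  · simpa using h.Ypow_a n a
  · simpa using h.Xpow_a n a

lemma X_Ypow (n : ℕ) : X * Y ^ (n + 1) = ι v * Y ^ n := by
  rw [pow_succ', ← mul_assoc, h.XY]

lemma Y_Xpow (n : ℕ) : Y * X ^ (n + 1) = ι (tw α 1 v) * X ^ n := by
  rw [pow_succ', ← mul_assoc, h.YX, tw_one]

lemma Ypow_X (n : ℕ) : Y ^ (n + 1) * X = ι (tw α (n + 1) v) * Y ^ n := by
  rw [pow_succ, mul_assoc, h.YX, h.Ypow_a, ← tw_one α, tw_tw]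

lemma Xpow_Y (n : ℕ) : X ^ (n + 1) * Y = ι (tw α (-n) v) * X ^ n := by
  rw [pow_succ, mul_assoc, h.XY, h.Xpow_a]

lemma Xpow_Ypow (n : ℕ) : ∃ c, X ^ n * Y ^ n = ι c := by
  induction n with
  | zero => exact ⟨1, by simp⟩
  | succ n ih =>
    obtain ⟨c, hc⟩ := ih
    refine ⟨tw α (-1) c * v, ?_⟩
    rw [pow_succ', pow_succ Y, mul_assoc, ← mul_assoc (X ^ n), hc, ← mul_assoc, h.Xa, mul_assoc,
      h.XY, map_mul, tw_neg_one]

/-- Right multiplication by `Y` shifts degrees and multiplies the coefficients by nonzero central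
elements, so it is injective. -/
lemma mul_Y_eq_zero [IsDomain A] (hv : v ≠ 0) {w : W} (hw : w * Y = 0) : w = 0 := by
  obtain ⟨f, rfl⟩ := h.ev_bij.2 w
  let e : ℤ → A := fun i => if 0 ≤ i then 1 else tw α (i + 1) v
  have he : ∀ i, e i ≠ 0 := by
    intro i
    simp only [e]
    split_ifs
    · exact one_ne_zero
    · simpa using hv
  let D : (ℤ →₀ A) →+ (ℤ →₀ A) := Finsupp.liftAddHom fun i =>
    (Finsupp.singleAddHom (i + 1)).comp (AddMonoidHom.mulRight (e i))
  have D1 : ∀ f i, D f (i + 1) = f i * e i := by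
    intro f i
    induction f using Finsupp.induction_linear with
    | zero => simp
    | add f g hf hg => simp [hf, hg, add_mul]
    | single j a =>
      simp only [D, Finsupp.liftAddHom_apply_single, AddMonoidHom.comp_apply,
        AddMonoidHom.mulRight_apply, Finsupp.singleAddHom_apply, Finsupp.single_apply, add_left_inj]
      split_ifs with hh
      · rw [hh]
      · simp
  have D2 : ∀ f, gwaEv ι X Y (D f) = gwaEv ι X Y f * Y := by
    intro f
    induction f using Finsupp.induction_linear with
    | zero => simp
    | add f g hf hg => simp [hf, hg, add_mul]
    | single j a =>
      simp only [D, Finsupp.liftAddHom_apply_single, AddMonoidHom.comp_apply,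
        AddMonoidHom.mulRight_apply, Finsupp.singleAddHom_apply, gwaEv_single, map_mul, mul_assoc]
      congr 1
      by_cases hj : 0 ≤ j
      · lift j to ℕ using hj
        have : ((j : ℤ) + 1) = ((j + 1 : ℕ) : ℤ) := by push_cast; rfl
        rw [this, gwaMon_natCast, gwaMon_natCast, pow_succ]
        simp [e]
      · obtain ⟨n, rfl⟩ : ∃ n : ℕ, j = -((n + 1 : ℕ) : ℤ) := ⟨(-j).toNat - 1, by omega⟩
        have h1 : -((n + 1 : ℕ) : ℤ) + 1 = -(n : ℤ) := by push_cast; ring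
        simp only [e, if_neg hj]
        rw [h1, gwaMon_neg_natCast, gwaMon_neg_natCast, h.Xpow_Y]
  have hD : D f = 0 := h.ev_bij.1 (by rw [D2, hw, map_zero])
  have : f = 0 := by
    ext i
    have := D1 f i
    rw [hD, Finsupp.zero_apply] at this
    exact (mul_eq_zero.1 this.symm).resolve_right (he i)
  rw [this, map_zero]

lemma mul_Ypow_eq_zero [IsDomain A] (hv : v ≠ 0) (n : ℕ) {w : W} (hw : w * Y ^ n = 0) : w = 0 := by
  induction n with
  | zero => simpa using hw
  | succ n ih => exact ih (h.mul_Y_eq_zero hv (by rw [mul_assoc, ← pow_succ]; exact hw))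

end IsGWA
end GWA

/-! ### Nonzero ideals contain a power of each generator -/

section Localize
variable {K A S W : Type*} [Field K] [Ring A] [Algebra K A] [Ring S] [Algebra K S] [Ring W]

/-- The subring `{(f(Y), f(y))}` of `W × S`, with `f` ranging over the polynomials `∑ aᵢ Yⁱ`: the
graph of the inclusion of the skew polynomial subring of `W` into the skew Laurent ring `S`. It
replaces the embedding of `W` into its localization `S` at the powers of `Y`. -/
def polyGraph (ι : A →+* W) (Y : W) (ιS : A →+* S) (y : S) : AddSubgroup (W × S) :=
  AddSubgroup.closure {p | ∃ (a : A) (n : ℕ), p = (ι a * Y ^ n, ιS a * y ^ n)}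

variable {α : A ≃ₐ[K] A} {v : A} {ι : A →+* W} {X Y : W} {ιS : A →ₐ[K] S} {yS : Sˣ}

lemma IsSkewLaurent.inv (hS : IsSkewLaurent α ιS yS) : IsSkewLaurent α.symm ιS yS⁻¹ where
  comm a := by
    rw [Units.inv_mul_eq_iff_eq_mul, ← mul_assoc, hS.comm, mul_assoc]
    simp
  free := by
    have e : (fun f : ℤ →₀ A => f.sum fun i a => ιS a * (((yS⁻¹) ^ i : Sˣ) : S)) =
        (fun f : ℤ →₀ A => f.sum fun i a => ιS a * ((yS ^ i : Sˣ) : S)) ∘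
          Finsupp.equivMapDomain (Equiv.neg ℤ) := by
      funext f
      simp [Finsupp.sum_equivMapDomain]
    rw [e]
    exact hS.free.comp (Finsupp.equivCongrLeft (Equiv.neg ℤ)).bijective

lemma polyGraph_mono {Y : W} {y : S} {ιT : A →+* S} (a : A) (n : ℕ) :
    (ι a * Y ^ n, ιT a * y ^ n) ∈ polyGraph ι Y ιT y :=
  AddSubgroup.subset_closure ⟨a, n, rfl⟩

lemma polyGraph_mul (hY : ∀ a, Y * ι a = ι (α a) * Y) (hS : IsSkewLaurent α ιS yS) {p q : W × S}
    (hp : p ∈ polyGraph ι Y ιS (yS : S)) (hq : q ∈ polyGraph ι Y ιS (yS : S)) :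
    p * q ∈ polyGraph ι Y ιS (yS : S) := by
  have hn : ∀ (n : ℕ) a, Y ^ n * ι a = ι ((⇑α)^[n] a) * Y ^ n := by
    intro n
    induction n with
    | zero => simp
    | succ n ih =>
      intro a
      rw [pow_succ, mul_assoc, hY, ← mul_assoc, ih, mul_assoc]; rfl
  have hnS : ∀ (n : ℕ) a, (yS : S) ^ n * ιS a = ιS ((⇑α)^[n] a) * (yS : S) ^ n := by
    intro n
    induction n with
    | zero => simp
    | succ n ih =>
      intro a
      rw [pow_succ, mul_assoc, hS.comm, ← mul_assoc, ih, mul_assoc]; rfl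
  induction hp, hq using AddSubgroup.closure_induction₂ with
  | mem p q hp hq =>
    obtain ⟨a, n, rfl⟩ := hp
    obtain ⟨b, k, rfl⟩ := hq
    convert polyGraph_mono (ι := ι) (ιT := (ιS : A →+* S)) (Y := Y) (y := (yS : S))
      (a * (⇑α)^[n] b) (n + k) using 1
    simp only [Prod.mk_mul_mk, map_mul, pow_add, Prod.mk.injEq, RingHom.coe_coe]
    constructor
    · rw [mul_assoc, ← mul_assoc (Y ^ n), hn]; simp only [mul_assoc]
    · rw [mul_assoc, ← mul_assoc ((yS : S) ^ n), hnS]; simp only [mul_assoc]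
  | zero_left => simp
  | zero_right => simp
  | add_left x y z _ _ _ h1 h2 => rw [add_mul]; exact add_mem h1 h2
  | add_right x y z _ _ _ h1 h2 => rw [mul_add]; exact add_mem h1 h2
  | neg_left x y _ _ h1 => rw [neg_mul]; exact neg_mem h1
  | neg_right x y _ _ h1 => rw [mul_neg]; exact neg_mem h1

/-- Elements of `polyGraph` are determined by their second component. -/
lemma polyGraph_inj (hS : IsSkewLaurent α ιS yS) {p : W × S}
    (hp : p ∈ polyGraph ι Y ιS (yS : S)) (h0 : p.2 = 0) : p.1 = 0 := by
  let ev : (ℤ →₀ A) →+ S := Finsupp.liftAddHom fun i =>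
    (AddMonoidHom.mulRight ((yS ^ i : Sˣ) : S)).comp (ιS : A →+* S).toAddMonoidHom
  have hev : Function.Injective ev := hS.free.1
  -- The first generator is irrelevant here, since only nonnegative degrees occur.
  have key : ∃ f : ℤ →₀ A, p.1 = gwaEv ι Y Y f ∧ p.2 = ev f := by
    clear h0
    induction hp using AddSubgroup.closure_induction with
    | mem p hp =>
      obtain ⟨a, n, rfl⟩ := hp
      exact ⟨Finsupp.single n a, by simp, by simp [ev]⟩
    | zero => exact ⟨0, by simp, by simp⟩
    | add p q _ _ hp hq =>
      obtain ⟨f, hf1, hf2⟩ := hp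
      obtain ⟨g, hg1, hg2⟩ := hq
      exact ⟨f + g, by simp [hf1, hg1], by simp [hf2, hg2]⟩
    | neg p _ hp =>
      obtain ⟨f, hf1, hf2⟩ := hp
      exact ⟨-f, by simp [hf1], by simp [hf2]⟩
  obtain ⟨f, hf1, hf2⟩ := key
  have : f = 0 := hev (by rw [← hf2, h0, map_zero])
  rw [hf1, this, map_zero]

/-- A nonzero ideal of a generalized Weyl algebra `W(A, α, v)` over a domain, `v ≠ 0`, contains a
power of `Y` as soon as `A[y^{±1}; α]` is simple: it generates the unit ideal there, and clearing
the finitely many negative powers of `y` in an expression of `1` leaves a power of `Y`. -/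
lemma IsGWA.exists_Ypow_mem [IsDomain A] [IsSimpleRing S]
    (h : IsGWA (α : A ≃+* A) v ι X Y) (hS : IsSkewLaurent α ιS yS) (hv : v ≠ 0)
    (P : TwoSidedIdeal W) (hP : P ≠ ⊥) : ∃ N : ℕ, Y ^ N ∈ P := by
  let T := polyGraph ι Y (ιS : A →+* S) (yS : S)
  have hT0 : ((0 : W), (0 : S)) ∈ T := zero_mem T
  let y : S := yS
  let yi : S := ((yS⁻¹ : Sˣ) : S)
  have hyi : y * yi = 1 := yS.mul_inv
  have hiy : yi * y = 1 := yS.inv_mul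
  have hmul : ∀ {p q}, p ∈ T → q ∈ T → p * q ∈ T := fun hp hq => polyGraph_mul h.Ya hS hp hq
  have hTa : ∀ a, (ι a, ιS a) ∈ T := fun a => by
    simpa using polyGraph_mono (ι := ι) (ιT := (ιS : A →+* S)) (Y := Y) (y := y) a 0
  have hTy : ∀ n, (Y ^ n, y ^ n) ∈ T := fun n => by
    simpa using polyGraph_mono (ι := ι) (ιT := (ιS : A →+* S)) (Y := Y) (y := y) 1 n
  have hyn : ∀ (n : ℕ) a, y ^ n * ιS a = ιS ((⇑α)^[n] a) * y ^ n := by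
    intro n
    induction n with
    | zero => simp
    | succ n ih =>
      intro a
      rw [pow_succ, mul_assoc, hS.comm, ← mul_assoc, ih, mul_assoc]; rfl
  have hyn' : ∀ (n : ℕ) a, ιS a * y ^ n = y ^ n * ιS ((⇑α.symm)^[n] a) := by
    intro n a
    rw [hyn, (Function.LeftInverse.iterate α.apply_symm_apply n) a]
  let C : Set S := {s | ∃ k n q, q ∈ P ∧ (q, y ^ k * s * y ^ n) ∈ T}
  have hCadd : ∀ {s t}, s ∈ C → t ∈ C → s + t ∈ C := by
    rintro s t ⟨k, n, q, hq, hqT⟩ ⟨k', n', q', hq', hqT'⟩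
    refine ⟨k + k', n + n', Y ^ k' * q * Y ^ n' + Y ^ k * q' * Y ^ n,
      P.add_mem (P.mul_mem_right _ _ (P.mul_mem_left _ _ hq))
        (P.mul_mem_right _ _ (P.mul_mem_left _ _ hq')), ?_⟩
    have := add_mem (hmul (hmul (hTy k') hqT) (hTy n')) (hmul (hmul (hTy k) hqT') (hTy n))
    convert this using 1
    simp only [Prod.mk_mul_mk, Prod.mk_add_mk]
    congr 1
    have e1 : y ^ (k + k') = y ^ k' * y ^ k := by rw [← pow_add, add_comm]
    have e2 : y ^ (n + n') = y ^ n' * y ^ n := by rw [← pow_add, add_comm]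
    rw [mul_add, add_mul]
    congr 1
    · rw [e1, pow_add]; simp only [mul_assoc]
    · rw [e2, pow_add]; simp only [mul_assoc]
  have hCzero : (0 : S) ∈ C := ⟨0, 0, 0, P.zero_mem, by simp [hT0]⟩
  have hCneg : ∀ {s}, s ∈ C → -s ∈ C := by
    rintro s ⟨k, n, q, hq, hqT⟩
    exact ⟨k, n, -q, P.neg_mem hq, by simpa using neg_mem hqT⟩
  have hspan : ∀ D : Set S, (0 ∈ D) → (∀ {s t}, s ∈ D → t ∈ D → s + t ∈ D) →
      (∀ {s t}, s ∈ D → t ∈ D → s * t ∈ D) → (∀ a, ιS a ∈ D) → y ∈ D → yi ∈ D → ∀ s, s ∈ D := by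
    intro D h0 hadd hmulD ha hy hyi s
    obtain ⟨f, rfl⟩ := hS.free.2 s
    have h1 : (1 : S) ∈ D := by simpa using ha 1
    have hp : ∀ {t : S}, t ∈ D → ∀ n : ℕ, t ^ n ∈ D := fun {t} ht n => by
      induction n with
      | zero => simpa using h1
      | succ n ih => rw [pow_succ]; exact hmulD ih ht
    refine Finset.sum_induction _ (· ∈ D) (fun _ _ => hadd) h0 fun i _ => hmulD (ha _) ?_
    obtain ⟨n, rfl | rfl⟩ := i.eq_nat_or_neg
    · simpa using hp hy n
    · have := hp hyi n
      simpa [yi, ← inv_pow] using this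
  have hL : ∀ t s, s ∈ C → t * s ∈ C := by
    refine hspan {t | ∀ s, s ∈ C → t * s ∈ C} (by simpa using fun _ _ => hCzero) ?_ ?_ ?_ ?_ ?_
    · intro s t hs ht r hr
      rw [add_mul]; exact hCadd (hs r hr) (ht r hr)
    · intro s t hs ht r hr
      rw [mul_assoc]; exact hs _ (ht r hr)
    · rintro a s ⟨k, n, q, hq, hqT⟩
      refine ⟨k, n, ι ((⇑α)^[k] a) * q, P.mul_mem_left _ _ hq, ?_⟩
      have := hmul (hTa ((⇑α)^[k] a)) hqT
      simpa only [Prod.mk_mul_mk, ← mul_assoc, hyn] using this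
    · rintro s ⟨k, n, q, hq, hqT⟩
      refine ⟨k, n, Y * q, P.mul_mem_left _ _ hq, ?_⟩
      have := hmul (hTy 1) hqT
      simpa only [Prod.mk_mul_mk, ← mul_assoc, pow_one, ← pow_succ, ← pow_succ'] using this
    · rintro s ⟨k, n, q, hq, hqT⟩
      refine ⟨k + 1, n, q, hq, ?_⟩
      rwa [pow_succ, mul_assoc (y ^ k), ← mul_assoc y, hyi, one_mul]
  have hRt : ∀ t s, s ∈ C → s * t ∈ C := by
    refine hspan {t | ∀ s, s ∈ C → s * t ∈ C} (by simpa using fun _ _ => hCzero) ?_ ?_ ?_ ?_ ?_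
    · intro s t hs ht r hr
      rw [mul_add]; exact hCadd (hs r hr) (ht r hr)
    · intro s t hs ht r hr
      rw [← mul_assoc]; exact ht _ (hs r hr)
    · rintro a s ⟨k, n, q, hq, hqT⟩
      refine ⟨k, n, q * ι ((⇑α.symm)^[n] a), P.mul_mem_right _ _ hq, ?_⟩
      have := hmul hqT (hTa ((⇑α.symm)^[n] a))
      simpa only [Prod.mk_mul_mk, mul_assoc, hyn'] using this
    · rintro s ⟨k, n, q, hq, hqT⟩
      refine ⟨k, n, q * Y, P.mul_mem_right _ _ hq, ?_⟩
      have := hmul hqT (hTy 1)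
      simpa only [Prod.mk_mul_mk, mul_assoc, pow_one, ← pow_succ, ← pow_succ'] using this
    · rintro s ⟨k, n, q, hq, hqT⟩
      refine ⟨k, n + 1, q, hq, ?_⟩
      rwa [pow_succ', mul_assoc (y ^ k), mul_assoc s, ← mul_assoc yi, hiy, one_mul, ← mul_assoc]
  let I : TwoSidedIdeal S := TwoSidedIdeal.mk' C hCzero hCadd hCneg
    (fun {a b} hb => hL a b hb) (fun {a b} ha => hRt b a ha)
  have hI : ∀ s, s ∈ I ↔ s ∈ C := fun s => TwoSidedIdeal.mem_mk' _ _ _ _ _ _ _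
  obtain ⟨p, hp, hp0⟩ : ∃ p ∈ P, p ≠ 0 := by
    by_contra! hcon
    exact hP (le_bot_iff.1 fun x hx => by rw [hcon x hx]; exact zero_mem _)
  have hclear : ∀ w : W, ∃ (N : ℕ) (s : S), (w * Y ^ N, s) ∈ T := by
    intro w
    obtain ⟨f, rfl⟩ := h.ev_bij.2 w
    induction f using Finsupp.induction_linear with
    | zero => exact ⟨0, 0, by simp [hT0]⟩
    | add f g hf hg =>
      obtain ⟨N, s, hs⟩ := hf
      obtain ⟨N', s', hs'⟩ := hg
      refine ⟨N + N', s * y ^ N' + s' * y ^ N, ?_⟩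
      have := add_mem (hmul hs (hTy N')) (hmul hs' (hTy N))
      convert this using 1
      simp only [Prod.mk_mul_mk, Prod.mk_add_mk, map_add, add_mul, mul_assoc, ← pow_add,
        add_comm N' N]
    | single i a =>
      obtain ⟨n, rfl | rfl⟩ := i.eq_nat_or_neg
      · exact ⟨0, _, by simpa using hmul (hTa a) (hTy n)⟩
      · obtain ⟨c, hc⟩ := h.Xpow_Ypow n
        refine ⟨n, ιS a * ιS c, ?_⟩
        simpa [mul_assoc, hc] using hmul (hTa a) (hTa c)
  obtain ⟨N, s, hs⟩ := hclear p
  have hs0 : s ≠ 0 := by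
    rintro rfl
    exact hp0 (h.mul_Ypow_eq_zero hv N (polyGraph_inj hS hs rfl))
  have h1 : (1 : S) ∈ I := IsSimpleRing.one_mem_of_ne_zero_mem I hs0
    ((hI s).2 ⟨0, 0, p * Y ^ N, P.mul_mem_right _ _ hp, by simpa using hs⟩)
  obtain ⟨k, n, q, hq, hqT⟩ := (hI 1).1 h1
  refine ⟨k + n, ?_⟩
  have hd := sub_mem hqT (hTy (k + n))
  have := polyGraph_inj hS hd (by simp [pow_add])
  rw [Prod.fst_sub, sub_eq_zero] at this
  exact (show q = Y ^ (k + n) from this) ▸ hq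

end Localize

/-! ### Lowering degrees inside an ideal -/

section Descent
variable {A W : Type*} [Ring A] [Ring W] {α : A ≃+* A} {v : A} {ι : A →+* W} {X Y : W}

namespace IsGWA
variable (h : IsGWA α v ι X Y)
include h

/-- From `Y^N ∈ P` with `N ≠ m` one gets `v Y^(N-1)` and `α^N(v) Y^(N-1)` in `P`, hence `Y^(N-1)`.
The descent can only stop at `Y^m`, or else at `1`. -/
lemma Ypow_descent {m : ℕ}
    (hcop : ∀ n : ℕ, 1 ≤ n → n ≠ m → ∃ b c, 1 = b * v + c * tw α n v)
    (P : TwoSidedIdeal W) (hP : P ≠ ⊤) (N : ℕ) (hN : Y ^ N ∈ P) : Y ^ m ∈ P := by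
  induction N with
  | zero => exact absurd (P.one_mem_iff.1 (by simpa using hN)) hP
  | succ N ih =>
    by_cases hm : N + 1 = m
    · exact hm ▸ hN
    obtain ⟨b, c, hbc⟩ := hcop (N + 1) (by omega) hm
    apply ih
    have e : Y ^ N = ι b * (X * Y ^ (N + 1)) + ι c * (Y ^ (N + 1) * X) := by
      rw [h.X_Ypow, h.Ypow_X, ← mul_assoc, ← mul_assoc, ← add_mul, ← map_mul, ← map_mul, ← map_add]
      push_cast at hbc
      rw [← hbc, map_one, one_mul]
    rw [e]
    exact P.add_mem (P.mul_mem_left _ _ (P.mul_mem_left _ _ hN))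
      (P.mul_mem_left _ _ (P.mul_mem_right _ _ hN))

/-- An ideal containing `Y^m` contains `(M ∩ α⁻¹(M) ∩ ⋯ ∩ α^(1-k)(M)) Y^(m-k)`
for all `k ≤ m`. -/
lemma mem_of_Ypow {m : ℕ}
    (hcop : ∀ n : ℕ, 1 ≤ n → n ≠ m → ∃ b c, 1 = b * v + c * tw α n v)
    {M : Set A} (hM : ∀ a ∈ M, ∃ b c, a = b * v + c * tw α m v)
    (P : TwoSidedIdeal W) (hY : Y ^ m ∈ P) (k j : ℕ) (hkj : k + j = m) (a : A)
    (ha : ∀ ℓ : ℕ, ℓ < k → tw α ℓ a ∈ M) : ι a * Y ^ j ∈ P := by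
  induction k generalizing j a with
  | zero =>
    obtain rfl : j = m := by omega
    exact P.mul_mem_left _ _ hY
  | succ k ih =>
    rcases Nat.eq_zero_or_pos k with rfl | hk
    · obtain ⟨b, c, hbc⟩ := hM a (by simpa using ha 0 (by omega))
      obtain rfl : m = j + 1 := by omega
      have e : ι a * Y ^ j = ι b * (X * Y ^ (j + 1)) + ι c * (Y ^ (j + 1) * X) := by
        push_cast at hbc
        rw [h.X_Ypow, h.Ypow_X, hbc]
        simp only [map_add, map_mul, add_mul, mul_assoc]
      rw [e]
      exact P.add_mem (P.mul_mem_left _ _ (P.mul_mem_left _ _ hY))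
        (P.mul_mem_left _ _ (P.mul_mem_right _ _ hY))
    · obtain ⟨b, c, hbc⟩ := hcop (j + 1) (by omega) (by omega)
      have h1 : ι a * Y ^ (j + 1) ∈ P := ih (j + 1) (by omega) a fun ℓ hℓ => ha ℓ (by omega)
      have h2 : ι (α a) * Y ^ (j + 1) ∈ P := ih (j + 1) (by omega) (α a) fun ℓ hℓ => by
        rw [← tw_one α, tw_tw]; exact_mod_cast ha (ℓ + 1) (by omega)
      have e : ι a * Y ^ j = ι b * (X * (ι (α a) * Y ^ (j + 1))) +
          ι c * (ι a * Y ^ (j + 1) * X) := by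
        push_cast at hbc
        rw [← mul_assoc X, h.Xa, mul_assoc _ X, h.X_Ypow, mul_assoc (ι a), h.Ypow_X,
          α.symm_apply_apply]
        simp only [← mul_assoc, ← map_mul]
        rw [← add_mul, ← map_add, mul_assoc b, mul_assoc c, ← h.central,
          ← tw_central α h.central, ← mul_assoc, ← mul_assoc, ← add_mul, ← hbc, one_mul]
      rw [e]
      exact P.add_mem (P.mul_mem_left _ _ (P.mul_mem_left _ _ h2))
        (P.mul_mem_left _ _ (P.mul_mem_right _ _ h1))

end IsGWA

/-- The degree `i` component of the ideal `J(M)`: those `a` lying in `α^(-ℓ)(M)` for every `ℓ` with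
`0 ≤ ℓ < m` and `0 ≤ ℓ + i < m`. For `|i| ≥ m` there is no condition. -/
def JMem (α : A ≃+* A) (M : TwoSidedIdeal A) (m : ℕ) (i : ℤ) (a : A) : Prop :=
  ∀ ℓ : ℤ, 0 ≤ ℓ → ℓ < m → 0 ≤ ℓ + i → ℓ + i < m → tw α ℓ a ∈ M

/-- The arithmetic hypotheses on `v` and the ideal `M = vA + α^m(v)A`. -/
structure Exceptional (α : A ≃+* A) (v : A) (M : TwoSidedIdeal A) (m : ℕ) : Prop where
  cop : ∀ n : ℕ, 1 ≤ n → n ≠ m → ∃ b c, 1 = b * v + c * tw α n v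
  gen : ∀ a ∈ M, ∃ b c, a = b * v + c * tw α m v
  v_mem : v ∈ M
  tw_v_mem : tw α m v ∈ M

lemma Exceptional.swap {M : TwoSidedIdeal A} {m : ℕ} (e : Exceptional α v M m) :
    Exceptional α.symm (α v) (M.comap (tw α (m - 1))) m where
  cop n h1 h2 := by
    obtain ⟨b, c, hbc⟩ := e.cop n h1 h2
    refine ⟨tw α (1 - n) c, tw α (1 - n) b, ?_⟩
    have := congrArg (tw α (1 - n)) hbc
    rw [map_one, map_add, map_mul, map_mul, tw_tw] at this
    rw [this, tw_symm, ← tw_one α, tw_tw, add_comm]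
    congr 4 <;> ring_nf
  gen a ha := by
    rw [TwoSidedIdeal.mem_comap] at ha
    obtain ⟨b, c, hbc⟩ := e.gen _ ha
    refine ⟨tw α (1 - m) c, tw α (1 - m) b, ?_⟩
    have := congrArg (tw α (1 - m)) hbc
    rw [map_add, map_mul, map_mul, tw_tw, tw_tw] at this
    rw [tw_symm, ← tw_one α v, tw_tw, add_comm]
    convert this using 1
    · rw [show (1 - m + (m - 1) : ℤ) = 0 by ring, tw_zero]
    · congr 4 <;> ring_nf
  v_mem := by
    rw [TwoSidedIdeal.mem_comap, ← tw_one α v, tw_tw]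
    simpa using e.tw_v_mem
  tw_v_mem := by
    rw [TwoSidedIdeal.mem_comap, ← tw_one α v, tw_symm, tw_tw, tw_tw]
    rw [show (m - 1 + -m + 1 : ℤ) = 0 by ring, tw_zero]
    exact e.v_mem

/-- `J(M)` is contained in every ideal that contains `X^m` and `Y^m`. -/
lemma IsGWA.J_le (h : IsGWA α v ι X Y) {M : TwoSidedIdeal A} {m : ℕ}
    (e : Exceptional α v M m) (P : TwoSidedIdeal W) (hY : Y ^ m ∈ P) (hX : X ^ m ∈ P)
    {i : ℤ} {a : A} (ha : JMem α M m i a) : ι a * gwaMon X Y i ∈ P := by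
  obtain ⟨n, rfl | rfl⟩ := i.eq_nat_or_neg
  · rw [gwaMon_natCast]
    rcases le_total m n with hmn | hmn
    · obtain ⟨d, rfl⟩ := Nat.exists_eq_add_of_le hmn
      rw [pow_add]
      exact P.mul_mem_left _ _ (P.mul_mem_right _ _ hY)
    · exact h.mem_of_Ypow e.cop (M := (M : Set A)) e.gen P hY (m - n) n (by omega) a
        fun ℓ hℓ => ha ℓ (by omega) (by omega) (by omega) (by omega)
  · rw [gwaMon_neg_natCast]
    rcases le_total m n with hmn | hmn
    · obtain ⟨d, rfl⟩ := Nat.exists_eq_add_of_le hmn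
      rw [pow_add]
      exact P.mul_mem_left _ _ (P.mul_mem_right _ _ hX)
    · have e' := e.swap
      refine h.swap.mem_of_Ypow e'.cop (M := (M.comap (tw α (m - 1)) : TwoSidedIdeal A))
        e'.gen P hX (m - n) n (by omega) a fun ℓ hℓ => ?_
      rw [SetLike.mem_coe, TwoSidedIdeal.mem_comap, tw_symm, tw_tw]
      exact ha _ (by omega) (by omega) (by omega) (by omega)

end Descent

/-! ### The ideal `J(M)` -/

section Ideal
variable {A W : Type*} [Ring A] [Ring W] {α : A ≃+* A} {v : A} {ι : A →+* W} {X Y : W}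
  {M : TwoSidedIdeal A} {m : ℕ}

namespace JMem
variable {i : ℤ} {a b : A}

lemma zero : JMem α M m i 0 := fun _ _ _ _ _ => by rw [map_zero]; exact zero_mem M

lemma add (ha : JMem α M m i a) (hb : JMem α M m i b) : JMem α M m i (a + b) :=
  fun ℓ h1 h2 h3 h4 => by rw [map_add]; exact add_mem (ha ℓ h1 h2 h3 h4) (hb ℓ h1 h2 h3 h4)

lemma neg (ha : JMem α M m i a) : JMem α M m i (-a) :=
  fun ℓ h1 h2 h3 h4 => by rw [map_neg]; exact neg_mem (ha ℓ h1 h2 h3 h4)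

lemma mul_left (c : A) (ha : JMem α M m i a) : JMem α M m i (c * a) :=
  fun ℓ h1 h2 h3 h4 => by rw [map_mul]; exact M.mul_mem_left _ _ (ha ℓ h1 h2 h3 h4)

lemma mul_right (c : A) (ha : JMem α M m i a) : JMem α M m i (a * c) :=
  fun ℓ h1 h2 h3 h4 => by rw [map_mul]; exact M.mul_mem_right _ _ (ha ℓ h1 h2 h3 h4)

end JMem

/-- The set of elements whose degree `i` coefficients satisfy `JMem α M m i`, as an additive
subgroup. -/
def JSub (α : A ≃+* A) (ι : A →+* W) (X Y : W) (M : TwoSidedIdeal A) (m : ℕ) : AddSubgroup W where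
  carrier := {w | ∃ f : ℤ →₀ A, (∀ i, JMem α M m i (f i)) ∧ gwaEv ι X Y f = w}
  zero_mem' := ⟨0, fun _ => JMem.zero, map_zero _⟩
  add_mem' := by
    rintro _ _ ⟨f, hf, rfl⟩ ⟨g, hg, rfl⟩
    exact ⟨f + g, fun i => (hf i).add (hg i), map_add _ _ _⟩
  neg_mem' := by
    rintro _ ⟨f, hf, rfl⟩
    exact ⟨-f, fun i => (hf i).neg, map_neg _ _⟩

lemma mem_JSub {w : W} : w ∈ JSub α ι X Y M m ↔
    ∃ f : ℤ →₀ A, (∀ i, JMem α M m i (f i)) ∧ gwaEv ι X Y f = w := Iff.rfl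

lemma term_mem_JSub {i : ℤ} {a : A} (ha : JMem α M m i a) :
    ι a * gwaMon X Y i ∈ JSub α ι X Y M m := by
  refine ⟨Finsupp.single i a, fun j => ?_, by simp⟩
  rw [Finsupp.single_apply]
  split_ifs with hij
  · exact hij ▸ ha
  · exact JMem.zero

lemma term_mem_JSub_Y {n : ℕ} {a : A} (ha : JMem α M m n a) :
    ι a * Y ^ n ∈ JSub α ι X Y M m := by
  simpa using term_mem_JSub (ι := ι) (X := X) (Y := Y) ha

lemma term_mem_JSub_X {n : ℕ} {a : A} (ha : JMem α M m (-n) a) :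
    ι a * X ^ n ∈ JSub α ι X Y M m := by
  simpa using term_mem_JSub (ι := ι) (X := X) (Y := Y) ha

lemma map_JSub (φ : W →+ W)
    (hφ : ∀ i a, JMem α M m i a → φ (ι a * gwaMon X Y i) ∈ JSub α ι X Y M m) {w : W}
    (hw : w ∈ JSub α ι X Y M m) : φ w ∈ JSub α ι X Y M m := by
  obtain ⟨f, hf, rfl⟩ := hw
  rw [gwaEv_apply, Finsupp.sum, map_sum]
  exact sum_mem fun i _ => hφ i _ (hf i)

lemma eq_natCast_or_eq_neg_succ (i : ℤ) : (∃ n : ℕ, i = n) ∨ ∃ n : ℕ, i = -((n + 1 : ℕ) : ℤ) := by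
  rcases le_or_gt 0 i with hi | hi
  · exact Or.inl ⟨i.toNat, by omega⟩
  · exact Or.inr ⟨(-i).toNat - 1, by omega⟩

lemma eq_neg_natCast_or_eq_succ (i : ℤ) : (∃ n : ℕ, i = -(n : ℤ)) ∨ ∃ n : ℕ, i = (n + 1 : ℕ) := by
  rcases le_or_gt i 0 with hi | hi
  · exact Or.inl ⟨(-i).toNat, by omega⟩
  · exact Or.inr ⟨i.toNat - 1, by omega⟩

namespace IsGWA
variable (h : IsGWA α v ι X Y) (e : Exceptional α v M m)
include h e

lemma JSub_Y_mul {w : W} (hw : w ∈ JSub α ι X Y M m) : Y * w ∈ JSub α ι X Y M m := by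
  refine map_JSub (AddMonoidHom.mulLeft Y) (fun i a ha => ?_) hw
  rw [AddMonoidHom.coe_mulLeft, ← mul_assoc, h.Ya, mul_assoc, ← tw_one α]
  rcases eq_natCast_or_eq_neg_succ i with ⟨n, rfl⟩ | ⟨n, rfl⟩
  · rw [gwaMon_natCast, ← pow_succ']
    refine term_mem_JSub_Y fun ℓ h1 h2 h3 h4 => ?_
    rw [tw_tw]
    exact ha _ (by omega) (by push_cast at h4; omega) (by omega) (by push_cast at h4; omega)
  · rw [gwaMon_neg_natCast, h.Y_Xpow, ← mul_assoc, ← map_mul]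
    refine term_mem_JSub_X fun ℓ h1 h2 h3 h4 => ?_
    rw [map_mul, tw_tw, tw_tw]
    rcases eq_or_ne (ℓ + 1) m with hl | hl
    · exact M.mul_mem_left _ _ (by rw [hl]; exact e.tw_v_mem)
    · exact M.mul_mem_right _ _ (ha _ (by omega) (by omega) (by push_cast; omega)
        (by push_cast; omega))

lemma JSub_X_mul {w : W} (hw : w ∈ JSub α ι X Y M m) : X * w ∈ JSub α ι X Y M m := by
  refine map_JSub (AddMonoidHom.mulLeft X) (fun i a ha => ?_) hw
  rw [AddMonoidHom.coe_mulLeft, ← mul_assoc, h.Xa, mul_assoc, ← tw_neg_one α]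
  rcases eq_neg_natCast_or_eq_succ i with ⟨n, rfl⟩ | ⟨n, rfl⟩
  · rw [gwaMon_neg_natCast, ← pow_succ']
    refine term_mem_JSub_X fun ℓ h1 h2 h3 h4 => ?_
    rw [tw_tw]
    push_cast at h3 h4
    exact ha _ (by omega) (by omega) (by omega) (by omega)
  · rw [gwaMon_natCast, h.X_Ypow, ← mul_assoc, ← map_mul]
    refine term_mem_JSub_Y fun ℓ h1 h2 h3 h4 => ?_
    rw [map_mul, tw_tw]
    rcases eq_or_ne ℓ 0 with rfl | hl
    · exact M.mul_mem_left _ _ (by simpa using e.v_mem)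
    · exact M.mul_mem_right _ _ (ha _ (by omega) (by omega) (by push_cast; omega)
        (by push_cast; omega))

lemma JSub_mul_Y {w : W} (hw : w ∈ JSub α ι X Y M m) : w * Y ∈ JSub α ι X Y M m := by
  refine map_JSub (AddMonoidHom.mulRight Y) (fun i a ha => ?_) hw
  rw [AddMonoidHom.mulRight_apply, mul_assoc]
  rcases eq_natCast_or_eq_neg_succ i with ⟨n, rfl⟩ | ⟨n, rfl⟩
  · rw [gwaMon_natCast, ← pow_succ]
    refine term_mem_JSub_Y fun ℓ h1 h2 h3 h4 => ?_
    push_cast at h3 h4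
    exact ha _ (by omega) (by omega) (by omega) (by omega)
  · rw [gwaMon_neg_natCast, h.Xpow_Y, ← mul_assoc, ← map_mul]
    refine term_mem_JSub_X fun ℓ h1 h2 h3 h4 => ?_
    rw [map_mul, tw_tw]
    rcases eq_or_ne (ℓ + -n) 0 with hl | hl
    · exact M.mul_mem_left _ _ (by rw [hl]; simpa using e.v_mem)
    · exact M.mul_mem_right _ _ (ha _ (by omega) (by omega) (by push_cast; omega)
        (by push_cast; omega))

lemma JSub_mul_X {w : W} (hw : w ∈ JSub α ι X Y M m) : w * X ∈ JSub α ι X Y M m := by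
  refine map_JSub (AddMonoidHom.mulRight X) (fun i a ha => ?_) hw
  rw [AddMonoidHom.mulRight_apply, mul_assoc]
  rcases eq_neg_natCast_or_eq_succ i with ⟨n, rfl⟩ | ⟨n, rfl⟩
  · rw [gwaMon_neg_natCast, ← pow_succ]
    refine term_mem_JSub_X fun ℓ h1 h2 h3 h4 => ?_
    push_cast at h3 h4
    exact ha _ (by omega) (by omega) (by omega) (by omega)
  · rw [gwaMon_natCast, h.Ypow_X, ← mul_assoc, ← map_mul]
    refine term_mem_JSub_Y fun ℓ h1 h2 h3 h4 => ?_
    rw [map_mul, tw_tw]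
    rcases eq_or_ne (ℓ + (n + 1)) m with hl | hl
    · exact M.mul_mem_left _ _ (by rw [hl]; exact e.tw_v_mem)
    · exact M.mul_mem_right _ _ (ha _ (by omega) (by omega) (by push_cast; omega)
        (by push_cast; omega))

omit e in
/-- `W` is generated as a ring by `ι(A)`, `X` and `Y`. -/
lemma gen_induction (D : Set W) (h0 : 0 ∈ D) (hadd : ∀ {s t}, s ∈ D → t ∈ D → s + t ∈ D)
    (hmul : ∀ {s t}, s ∈ D → t ∈ D → s * t ∈ D) (ha : ∀ a, ι a ∈ D) (hX : X ∈ D) (hY : Y ∈ D)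
    (w : W) : w ∈ D := by
  obtain ⟨f, rfl⟩ := h.ev_bij.2 w
  have hp : ∀ {t : W}, t ∈ D → ∀ n : ℕ, t ^ n ∈ D := fun {t} ht n => by
    induction n with
    | zero => simpa using ha 1
    | succ n ih => rw [pow_succ]; exact hmul ih ht
  refine Finset.sum_induction _ (· ∈ D) (fun _ _ => hadd) h0 fun i _ => hmul (ha _) ?_
  obtain ⟨n, rfl | rfl⟩ := i.eq_nat_or_neg
  · simpa using hp hY n
  · simpa using hp hX n

lemma JSub_mul_left (t : W) : ∀ w ∈ JSub α ι X Y M m, t * w ∈ JSub α ι X Y M m := by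
  refine h.gen_induction {t | ∀ w ∈ JSub α ι X Y M m, t * w ∈ JSub α ι X Y M m}
    (fun w _ => by rw [zero_mul]; exact zero_mem _) ?_ ?_ ?_ (fun w => h.JSub_X_mul e)
    (fun w => h.JSub_Y_mul e) t
  · intro s t hs ht w hw
    rw [add_mul]; exact add_mem (hs w hw) (ht w hw)
  · intro s t hs ht w hw
    rw [mul_assoc]; exact hs _ (ht w hw)
  · intro c w hw
    refine map_JSub (AddMonoidHom.mulLeft (ι c)) (fun i a ha => ?_) hw
    rw [AddMonoidHom.coe_mulLeft, ← mul_assoc, ← map_mul]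
    exact term_mem_JSub (ha.mul_left c)

lemma JSub_mul_right (t : W) : ∀ w ∈ JSub α ι X Y M m, w * t ∈ JSub α ι X Y M m := by
  refine h.gen_induction {t | ∀ w ∈ JSub α ι X Y M m, w * t ∈ JSub α ι X Y M m}
    (fun w _ => by rw [mul_zero]; exact zero_mem _) ?_ ?_ ?_ (fun w => h.JSub_mul_X e)
    (fun w => h.JSub_mul_Y e) t
  · intro s t hs ht w hw
    rw [mul_add]; exact add_mem (hs w hw) (ht w hw)
  · intro s t hs ht w hw
    rw [← mul_assoc]; exact ht _ (hs w hw)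
  · intro c w hw
    refine map_JSub (AddMonoidHom.mulRight (ι c)) (fun i a ha => ?_) hw
    rw [AddMonoidHom.mulRight_apply, mul_assoc, h.mon_a, ← mul_assoc, ← map_mul]
    exact term_mem_JSub (ha.mul_right _)

/-- The graded ideal `J(M)` as a two-sided ideal. -/
def JIdeal : TwoSidedIdeal W := TwoSidedIdeal.mk' (JSub α ι X Y M m)
  (zero_mem _) add_mem neg_mem (fun {t w} hw => h.JSub_mul_left e t w hw)
  (fun {w t} hw => h.JSub_mul_right e t w hw)

lemma mem_JIdeal {w : W} : w ∈ h.JIdeal e ↔ w ∈ JSub α ι X Y M m :=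
  TwoSidedIdeal.mem_mk' _ _ _ _ _ _ _

omit e in
lemma term_mem_JSub_iff {i : ℤ} {a : A} :
    ι a * gwaMon X Y i ∈ JSub α ι X Y M m ↔ JMem α M m i a := by
  refine ⟨?_, term_mem_JSub⟩
  rintro ⟨f, hf, hfa⟩
  rw [← gwaEv_single] at hfa
  have := hf i
  rwa [h.ev_bij.1 hfa, Finsupp.single_eq_same] at this

lemma JIdeal_ne_top (hm : 1 ≤ m) (hM : M ≠ ⊤) : h.JIdeal e ≠ ⊤ := by
  intro htop
  have h1 := (h.mem_JIdeal e).1 ((h.JIdeal e).one_mem_iff.2 htop)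
  have h2 : ι 1 * gwaMon X Y 0 ∈ JSub α ι X Y M m := by simpa [gwaMon] using h1
  have := h.term_mem_JSub_iff.1 h2 0 le_rfl (by omega) (by simp) (by simp; omega)
  rw [tw_zero] at this
  exact hM (M.one_mem_iff.1 this)

lemma JIdeal_ne_bot [Nontrivial A] : h.JIdeal e ≠ ⊥ := by
  intro hbot
  have h1 : ι 1 * Y ^ m ∈ h.JIdeal e :=
    (h.mem_JIdeal e).2 (term_mem_JSub_Y fun ℓ h1 h2 h3 h4 => by omega)
  rw [hbot, TwoSidedIdeal.mem_bot, ← gwaMon_natCast X Y, ← gwaEv_single] at h1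
  have := h.ev_bij.1 (h1.trans (map_zero (gwaEv ι X Y)).symm)
  exact one_ne_zero (Finsupp.single_eq_zero.1 this)

end IsGWA
end Ideal

/-! ### Every proper nonzero ideal lies in `J(M)` -/

section Maximal
variable {A W : Type*} [Ring A] [Ring W] {α : A ≃+* A} {v : A} {ι : A →+* W} {X Y : W}
  {M : TwoSidedIdeal A} {m : ℕ}

/-- For `0 < n < m` the central element `α^n(v)` is invertible modulo `M`. -/
lemma Exceptional.mem_of_mul_mem (e : Exceptional α v M m) (hv : ∀ a, v * a = a * v) {n : ℤ}
    (h1 : 0 < n) (h2 : n < m) {a : A} (ha : a * tw α n v ∈ M) : a ∈ M := by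
  lift n to ℕ using h1.le
  obtain ⟨b, c, hbc⟩ := e.cop n (by omega) (by omega)
  have : a = b * a * v + c * (a * tw α n v) := by
    rw [mul_assoc b, ← hv a, ← tw_central α hv, ← mul_assoc, ← mul_assoc, ← add_mul, ← hbc, one_mul]
  rw [this]
  exact M.add_mem (M.mul_mem_left _ _ e.v_mem) (M.mul_mem_left _ _ ha)

/-- Chinese remainder elements for the pairwise comaximal ideals `α^(-k)(M)`, `0 ≤ k < m`: `c` is
`1` modulo `α^(-ℓ)(M)` and `0` modulo the others. -/
lemma Exceptional.exists_crt (e : Exceptional α v M m) (ℓ : ℕ) (s : Finset ℕ)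
    (hs : ∀ k ∈ s, k < m ∧ k ≠ ℓ) :
    ∃ c, tw α ℓ c - 1 ∈ M ∧ ∀ k ∈ s, tw α k c ∈ M := by
  induction s using Finset.induction_on with
  | empty => exact ⟨1, by simp, by simp⟩
  | insert k s hk ih =>
    obtain ⟨c, hc1, hc2⟩ := ih fun k hk => hs k (Finset.mem_insert_of_mem hk)
    obtain ⟨hk1, hk2⟩ := hs k (Finset.mem_insert_self _ _)
    obtain ⟨p, q, hpq⟩ := e.cop (m - k + ℓ) (by omega) (by omega)
    have hd1 : q * tw α ((m - k + ℓ : ℕ) : ℤ) v - 1 ∈ M := by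
      have : q * tw α ((m - k + ℓ : ℕ) : ℤ) v - 1 = -(p * v) := by
        rw [eq_neg_iff_add_eq_zero]
        rw [hpq]; abel
      rw [this]
      exact M.neg_mem (M.mul_mem_left _ _ e.v_mem)
    refine ⟨c * tw α (-ℓ) (q * tw α ((m - k + ℓ : ℕ) : ℤ) v), ?_, ?_⟩
    · set d := q * tw α ((m - k + ℓ : ℕ) : ℤ) v
      rw [map_mul, tw_tw, add_neg_cancel, tw_zero]
      have : tw α ℓ c * d - 1 = (tw α ℓ c - 1) * d + (d - 1) := by rw [sub_mul, one_mul]; abel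
      rw [this]
      exact M.add_mem (M.mul_mem_right _ _ hc1) hd1
    · intro j hj
      rw [map_mul]
      rcases Finset.mem_insert.1 hj with rfl | hj
      · refine M.mul_mem_left _ _ ?_
        rw [tw_tw, map_mul, tw_tw]
        refine M.mul_mem_left _ _ ?_
        have : (j + -ℓ + ((m - j + ℓ : ℕ) : ℤ)) = m := by omega
        rw [this]
        exact e.tw_v_mem
      · exact M.mul_mem_right _ _ (hc2 j hj)

namespace IsGWA
variable (h : IsGWA α v ι X Y) (e : Exceptional α v M m) (P : TwoSidedIdeal W)
include h e

/-- An element `b·Y^n ∈ P` with `b ∉ α^(-ℓ)(M)`, `0 ≤ ℓ` and `ℓ + n < m`, can be multiplied by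
`X^n` to give an element of `P ∩ A` outside `α^(-ℓ)(M)`. -/
lemma exists_deg_zero_Y {ℓ : ℤ} (hℓ : 0 ≤ ℓ) (n : ℕ) (hn : ℓ + n < m) (b : A)
    (hb : tw α ℓ b ∉ M) (hP : ι b * Y ^ n ∈ P) : ∃ a, ι a ∈ P ∧ tw α ℓ a ∉ M := by
  induction n generalizing b with
  | zero => exact ⟨b, by simpa using hP, hb⟩
  | succ n ih =>
    push_cast at hn
    refine ih (by omega) (b * tw α (n + 1) v) (fun hcon => hb ?_) ?_
    · rw [map_mul, tw_tw] at hcon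
      exact e.mem_of_mul_mem h.central (by omega) (by omega) hcon
    · have := P.mul_mem_right _ X hP
      rwa [mul_assoc, h.Ypow_X, ← mul_assoc, ← map_mul] at this

lemma exists_deg_zero_X {ℓ : ℤ} (hℓ : ℓ < m) (n : ℕ) (hn : 0 ≤ ℓ - n) (b : A)
    (hb : tw α ℓ b ∉ M) (hP : ι b * X ^ n ∈ P) : ∃ a, ι a ∈ P ∧ tw α ℓ a ∉ M := by
  induction n generalizing b with
  | zero => exact ⟨b, by simpa using hP, hb⟩
  | succ n ih =>
    push_cast at hn
    refine ih (by omega) (b * tw α (-n) v) (fun hcon => hb ?_) ?_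
    · rw [map_mul, tw_tw] at hcon
      exact e.mem_of_mul_mem h.central (by omega) (by omega) hcon
    · have := P.mul_mem_right _ Y hP
      rwa [mul_assoc, h.Xpow_Y, ← mul_assoc, ← map_mul] at this

/-- If `P ∩ A` is not inside one of the ideals `α^(-ℓ)(M)`, `0 ≤ ℓ < m`, it is inside none. -/
lemma deg_zero_spread {ℓ₀ : ℕ} (h₀ : ℓ₀ < m) (hP : ∃ a, ι a ∈ P ∧ tw α ℓ₀ a ∉ M) (ℓ : ℕ)
    (hℓ : ℓ < m) : ∃ a, ι a ∈ P ∧ tw α ℓ a ∉ M := by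
  have up : ∀ ℓ : ℕ, ℓ + 1 < m → (∃ a, ι a ∈ P ∧ tw α ℓ a ∉ M) →
      ∃ a, ι a ∈ P ∧ tw α (ℓ + 1 : ℕ) a ∉ M := by
    rintro ℓ hl ⟨a, ha, haM⟩
    refine ⟨tw α (-1) a * v, ?_, fun hcon => haM ?_⟩
    · have := P.mul_mem_right _ Y (P.mul_mem_left X _ ha)
      rwa [h.Xa, mul_assoc, h.XY, ← tw_neg_one, ← map_mul] at this
    · rw [map_mul, tw_tw] at hcon
      have := e.mem_of_mul_mem h.central (by omega) (by omega) hcon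
      rwa [show ((ℓ + 1 : ℕ) : ℤ) + -1 = ℓ by push_cast; ring] at this
  have down : ∀ ℓ : ℕ, ℓ + 1 < m → (∃ a, ι a ∈ P ∧ tw α (ℓ + 1 : ℕ) a ∉ M) →
      ∃ a, ι a ∈ P ∧ tw α ℓ a ∉ M := by
    rintro ℓ hl ⟨a, ha, haM⟩
    refine ⟨tw α 1 a * tw α 1 v, ?_, fun hcon => haM ?_⟩
    · have := P.mul_mem_right _ X (P.mul_mem_left Y _ ha)
      rwa [h.Ya, mul_assoc, h.YX, ← tw_one α, ← tw_one α v, ← map_mul] at this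
    · rw [map_mul, tw_tw, tw_tw] at hcon
      have := e.mem_of_mul_mem h.central (by omega) (by omega) hcon
      exact_mod_cast this
  have base : ∃ a, ι a ∈ P ∧ tw α (0 : ℕ) a ∉ M := by
    induction ℓ₀ with
    | zero => exact hP
    | succ n ih => exact ih (by omega) (down n h₀ hP)
  induction ℓ with
  | zero => exact base
  | succ n ih => exact up n hℓ (ih (by omega))

/-- If `P` contains `X^m` and `Y^m` and `P ∩ A` is not inside some `α^(-ℓ)(M)`, `0 ≤ ℓ < m`, then
`P = W`: the ideals `P ∩ A` and `α^(-ℓ)(M)` are then comaximal for every such `ℓ`, while `P ∩ A`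
contains the intersection of the `α^(-ℓ)(M)`. -/
lemma eq_top_of_deg_zero (hM : IsMaximalTwoSided M) (hY : Y ^ m ∈ P) (hX : X ^ m ∈ P)
    {ℓ₀ : ℕ} (h₀ : ℓ₀ < m) (hP : ∃ a, ι a ∈ P ∧ tw α ℓ₀ a ∉ M) : P = ⊤ := by
  have h1 : ∀ ℓ : ℕ, ℓ < m → ∃ a, ι a ∈ P ∧ 1 - tw α ℓ a ∈ M := by
    intro ℓ hℓ
    obtain ⟨a, ha, haM⟩ := h.deg_zero_spread e P h₀ hP ℓ hℓ
    let P' : TwoSidedIdeal A := (P.comap ι).comap (tw α (-ℓ))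
    have hP' : tw α ℓ a ∈ P' := by simpa [P', TwoSidedIdeal.mem_comap] using ha
    have hlt : M < M ⊔ P' := by
      refine lt_of_le_of_ne le_sup_left fun heq => haM ?_
      rw [heq]
      exact TwoSidedIdeal.mem_sup_right hP'
    have h1 : (1 : A) ∈ M ⊔ P' := (TwoSidedIdeal.one_mem_iff _).2 (hM.2 _ hlt)
    obtain ⟨y, hy, w, hw, hyw⟩ := TwoSidedIdeal.mem_sup.1 h1
    refine ⟨tw α (-ℓ) w, by simpa [P', TwoSidedIdeal.mem_comap] using hw, ?_⟩
    rw [tw_tw, add_neg_cancel, tw_zero, ← hyw, add_sub_cancel_right]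
    exact hy
  have h2 : ∀ n : ℕ, n ≤ m → ∃ a, ι a ∈ P ∧ ∀ ℓ < n, 1 - tw α ℓ a ∈ M := by
    intro n
    induction n with
    | zero => exact fun _ => ⟨0, by simp, by simp⟩
    | succ n ih =>
      intro hn
      obtain ⟨a, ha, haM⟩ := ih (by omega)
      obtain ⟨b, hb, hbM⟩ := h1 n (by omega)
      refine ⟨a + b - a * b, ?_, fun ℓ hℓ => ?_⟩
      · rw [map_sub, map_add, map_mul]
        exact P.sub_mem (P.add_mem ha hb) (P.mul_mem_left _ _ hb)
      · have : 1 - tw α ℓ (a + b - a * b) = (1 - tw α ℓ a) * (1 - tw α ℓ b) := by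
          rw [map_sub, map_add, map_mul]; noncomm_ring
        rw [this]
        rcases Nat.lt_succ_iff_lt_or_eq.1 hℓ with hl | rfl
        · exact M.mul_mem_right _ _ (haM ℓ hl)
        · exact M.mul_mem_left _ _ hbM
  obtain ⟨a, ha, haM⟩ := h2 m le_rfl
  have h3 : ι (1 - a) * gwaMon X Y 0 ∈ P := by
    refine h.J_le e P hY hX fun ℓ h1 h2 _ _ => ?_
    lift ℓ to ℕ using h1
    rw [map_sub, map_one]
    exact haM ℓ (by omega)
  rw [← P.one_mem_iff]
  have h4 : ι (1 - a) ∈ P := by simpa [gwaMon] using h3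
  simpa using P.add_mem h4 ha

/-- A proper ideal containing `X^m` and `Y^m` lies in `J(M)`. The Chinese remainder elements play
the role of diagonal matrix units: multiplying `p ∈ P` by two of them isolates, modulo `J(M)`, one
homogeneous component `aᵢ` of `p` at one of the factors `A/α^(-ℓ)(M)`. -/
lemma le_JIdeal (hM : IsMaximalTwoSided M) (hY : Y ^ m ∈ P) (hX : X ^ m ∈ P)
    (hP : P ≠ ⊤) : P ≤ h.JIdeal e := by
  intro p hp
  obtain ⟨f, rfl⟩ := h.ev_bij.2 p
  rw [h.mem_JIdeal e]
  refine ⟨f, fun i ℓ hl0 hlm hi0 him => ?_, rfl⟩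
  by_contra hfi
  apply hP
  lift ℓ to ℕ using hl0
  obtain ⟨k, hk⟩ : ∃ k : ℕ, ℓ + i = k := ⟨(ℓ + i).toNat, by omega⟩
  obtain rfl : i = k - ℓ := by omega
  obtain ⟨c, hc1, hc2⟩ := e.exists_crt ℓ ((Finset.range m).erase ℓ) (by
    intro j hj; simp at hj; exact ⟨hj.2, hj.1⟩)
  obtain ⟨d, hd1, hd2⟩ := e.exists_crt k ((Finset.range m).erase k) (by
    intro j hj; simp at hj; exact ⟨hj.2, hj.1⟩)
  have key : ∀ g : ℤ →₀ A, ι c * gwaEv ι X Y g * ι d -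
      ι (c * g (k - ℓ) * tw α (k - ℓ) d) * gwaMon X Y (k - ℓ) ∈ P := by
    intro g
    induction g using Finsupp.induction_linear with
    | zero => simp
    | add g g' hg hg' =>
      convert P.add_mem hg hg' using 1
      simp only [map_add, map_mul, Finsupp.add_apply, mul_add, add_mul]
      abel
    | single j a =>
      rw [gwaEv_single, ← mul_assoc, mul_assoc _ _ (ι d), h.mon_a, ← mul_assoc, ← map_mul,
        ← map_mul, Finsupp.single_apply]
      split_ifs with hj
      · rw [hj, sub_self]; exact P.zero_mem
      · simp only [mul_zero, zero_mul, map_zero, sub_zero]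
        refine h.J_le e P hY hX fun l h1 h2 h3 h4 => ?_
        rw [map_mul, map_mul, tw_tw]
        lift l to ℕ using h1
        rcases eq_or_ne l ℓ with rfl | hl
        · obtain ⟨r, hr⟩ : ∃ r : ℕ, l + j = r := ⟨(l + j).toNat, by omega⟩
          rw [hr]
          exact M.mul_mem_left _ _ (hd2 r (by simp; omega))
        · exact M.mul_mem_right _ _ (M.mul_mem_right _ _ (hc2 l (by simp; omega)))
  set b := c * f (k - ℓ) * tw α (k - ℓ) d with hb
  have hbP : ι b * gwaMon X Y (k - ℓ) ∈ P := by
    have := P.sub_mem (P.mul_mem_right _ (ι d) (P.mul_mem_left (ι c) _ hp)) (key f)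
    rwa [sub_sub_cancel] at this
  have hbM : tw α ℓ b ∉ M := by
    intro hcon
    apply hfi
    rw [hb, map_mul, map_mul, tw_tw, add_sub_cancel] at hcon
    set c' := tw α ℓ c
    set d' := tw α k d
    set a := tw α ℓ (f (k - ℓ))
    have : a = c' * a * d' - ((c' - 1) * (a * d') + a * (d' - 1)) := by noncomm_ring
    rw [this]
    exact M.sub_mem hcon (M.add_mem (M.mul_mem_right _ _ hc1) (M.mul_mem_left _ _ hd1))
  refine h.eq_top_of_deg_zero e P hM hY hX (ℓ₀ := ℓ) (by omega) ?_
  obtain ⟨n, hn | hn⟩ := (k - ℓ : ℤ).eq_nat_or_neg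
  · rw [hn, gwaMon_natCast] at hbP
    exact h.exists_deg_zero_Y e P (by omega) n (by omega) b hbM hbP
  · rw [hn, gwaMon_neg_natCast] at hbP
    exact h.exists_deg_zero_X e P (by omega) n (by omega) b hbM hbP

end IsGWA
end Maximal

/-! ### The quotient by `z − λ` as a generalized Weyl algebra -/

section Quotient
variable {K A R Q : Type*} [Field K] [Ring A] [Algebra K A] [Ring R] [Algebra K R] [Ring Q]

/-- The element `∑ aᵢⱼ·yⁱxʲ` with prescribed coefficients, additively in the coefficients. -/
def skewEv (ι : A →+* R) (x y : R) : (ℕ × ℕ →₀ A) →+ R :=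
  Finsupp.liftAddHom fun p =>
    (AddMonoidHom.mulRight (y ^ p.1 * x ^ p.2)).comp ι.toAddMonoidHom

@[simp] lemma skewEv_single (ι : A →+* R) (x y : R) (p : ℕ × ℕ) (a : A) :
    skewEv ι x y (Finsupp.single p a) = ι a * (y ^ p.1 * x ^ p.2) := by
  simp [skewEv]

/-- `R/(z − λ)R` is the generalized Weyl algebra `W(A, α, u + λ)`. Independence of the monomials
holds since `(z − λ) yⁱxʲ = yⁱ⁺¹xʲ⁺¹ − αⁱ⁺¹(u + λ) yⁱxʲ`, so that a nonzero multiple of `z − λ`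
involves some monomial with both exponents positive. -/
lemma IsAmbiskew.isGWA_quotient {α : A ≃ₐ[K] A} {u : A} {ι : A →ₐ[K] R} {x y : R}
    (hR : IsAmbiskew α u ι x y) {z : R} (hz : z = x * y - ι u) (lam : K)
    (π : R →+* Q) (hπsurj : Function.Surjective π)
    (hπker : ∀ r : R, π r = 0 ↔ ∃ s : R, r = (z - algebraMap K R lam) * s) :
    IsGWA (α : A ≃+* A) (u + algebraMap K A lam) (π.comp (ι : A →+* R)) (π x) (π y) := by
  set v := u + algebraMap K A lam with hv
  have hιv : ι v = ι u + algebraMap K R lam := by rw [hv, map_add, AlgHom.commutes]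
  have hαv : α v = α u + algebraMap K A lam := by rw [hv, map_add, AlgEquiv.commutes]
  have hcen : ∀ a, v * a = a * v := by
    intro a
    rw [hv, add_mul, mul_add, hR.ucentral, Algebra.commutes]
  set ζ := z - algebraMap K R lam with hζ
  have hζx : ζ = x * y - ι v := by rw [hζ, hz, hιv]; abel
  have hζy : ζ = y * x - ι (α v) := by
    have : ι (α v) = ι (α u) + algebraMap K R lam := by rw [hαv, map_add, AlgHom.commutes]
    rw [hζ, hz, hR.xy, this, map_sub]; abel
  have hπζ : π ζ = 0 := (hπker ζ).2 ⟨1, by simp⟩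
  have hζa : ∀ a, ζ * ι a = ι a * ζ := by
    intro a
    rw [hζx, sub_mul, mul_sub, ← map_mul, ← map_mul, hcen, mul_assoc, hR.ya, ← mul_assoc, hR.xa,
      α.symm_apply_apply, mul_assoc]
  have hζY : ζ * y = y * ζ := by
    nth_rewrite 2 [hζx]
    rw [hζy, sub_mul, mul_sub, hR.ya, mul_assoc]
  have hζyn : ∀ n : ℕ, ζ * y ^ n = y ^ n * ζ := fun n => (Commute.pow_right hζY n)
  have hyn : ∀ (n : ℕ) a, y ^ n * ι a = ι (tw (α : A ≃+* A) n a) * y ^ n := by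
    intro n
    induction n with
    | zero => simp
    | succ n ih =>
      intro a
      rw [pow_succ, mul_assoc, hR.ya, ← mul_assoc, ih, mul_assoc]
      congr 2
  have hmono : ∀ i j : ℕ, ζ * (y ^ i * x ^ j) =
      y ^ (i + 1) * x ^ (j + 1) - ι (tw (α : A ≃+* A) (i + 1) v) * (y ^ i * x ^ j) := by
    intro i j
    rw [← mul_assoc, hζyn, hζy, mul_sub, hyn, sub_mul]
    congr 1
    · rw [pow_succ, pow_succ' x]; simp only [mul_assoc]
    · rw [mul_assoc, show α v = (α : A ≃+* A) v from rfl, ← tw_one (α : A ≃+* A), tw_tw]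
  refine ⟨hcen, ?_, ?_, ?_, ?_, ?_, ?_⟩
  · rw [← map_mul, ← sub_eq_zero]
    simpa [hζy] using hπζ
  · rw [← map_mul, ← sub_eq_zero]
    simpa [hζx] using hπζ
  · intro a
    simpa using congrArg π (hR.ya a)
  · intro a
    simpa using congrArg π (hR.xa a)
  · let D : (ℕ × ℕ →₀ A) →+ (ℕ × ℕ →₀ A) := Finsupp.liftAddHom fun p =>
      Finsupp.singleAddHom (p.1 + 1, p.2 + 1) -
        (Finsupp.singleAddHom p).comp (AddMonoidHom.mulRight (tw (α : A ≃+* A) (p.1 + 1) v))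
    have hDs : ∀ p a, D (Finsupp.single p a) = Finsupp.single (p.1 + 1, p.2 + 1) a -
        Finsupp.single p (a * tw (α : A ≃+* A) (p.1 + 1) v) := by
      intro p a; simp [D]
    have hDev : ∀ g, skewEv (ι : A →+* R) x y (D g) = ζ * skewEv (ι : A →+* R) x y g := by
      intro g
      induction g using Finsupp.induction_linear with
      | zero => simp
      | add f g hf hg => simp [hf, hg, mul_add]
      | single p a =>
        rw [hDs, map_sub, skewEv_single, skewEv_single, skewEv_single]
        simp only [RingHom.coe_coe, map_mul]
        rw [← mul_assoc ζ, hζa, mul_assoc _ ζ, hmono, mul_sub]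
        simp only [mul_assoc]
    have hDc : ∀ g i j, D g (i + 1, j + 1) =
        g (i, j) - g (i + 1, j + 1) * tw (α : A ≃+* A) (i + 1 + 1) v := by
      intro g i j
      induction g using Finsupp.induction_linear with
      | zero => simp
      | add f g hf hg => simp only [map_add, Finsupp.add_apply, hf, hg, add_mul]; abel
      | single p a =>
        obtain ⟨p, q⟩ := p
        rw [hDs]
        simp only [Finsupp.sub_apply, Finsupp.single_apply, Prod.mk.injEq, add_left_inj]
        congr 1
        split_ifs with hh
        · rw [hh.1]; push_cast; rfl
        · simp
    let L : ℤ → ℕ × ℕ := fun i => (i.toNat, (-i).toNat)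
    have hL : Function.Injective L := by
      intro i j hij
      simp only [L, Prod.mk.injEq] at hij
      omega
    have hLev : ∀ f, gwaEv (π.comp (ι : A →+* R)) (π x) (π y) f =
        π (skewEv (ι : A →+* R) x y (f.mapDomain L)) := by
      intro f
      induction f using Finsupp.induction_linear with
      | zero => simp
      | add f g hf hg => simp [hf, hg, Finsupp.mapDomain_add]
      | single i a =>
        obtain ⟨n, rfl | rfl⟩ := i.eq_nat_or_neg <;> simp [Finsupp.mapDomain_single, L]
    intro f f' hff
    rw [← sub_eq_zero]
    have h0 : gwaEv (π.comp (ι : A →+* R)) (π x) (π y) (f - f') = 0 := by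
      rw [map_sub, sub_eq_zero]; exact hff
    generalize f - f' = f at h0
    rw [hLev, hπker] at h0
    obtain ⟨s, hs⟩ := h0
    obtain ⟨g, rfl⟩ : ∃ g, skewEv (ι : A →+* R) x y g = s := hR.free.2 s
    rw [← hDev] at hs
    have hfg : f.mapDomain L = D g := hR.free.1 hs
    have hrec : ∀ i j, g (i, j) = g (i + 1, j + 1) * tw (α : A ≃+* A) (i + 1 + 1) v := by
      intro i j
      rw [← sub_eq_zero, ← hDc, ← hfg]
      apply Finsupp.mapDomain_of_notMem_range
      rintro ⟨l, hl⟩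
      simp only [L, Prod.mk.injEq] at hl
      omega
    have hvan : ∀ N i j : ℕ, g (i + N, j + N) = 0 → g (i, j) = 0 := by
      intro N
      induction N with
      | zero => intro i j h; simpa using h
      | succ N ih =>
        intro i j h
        apply ih
        rw [hrec, add_assoc, add_assoc, h, zero_mul]
    have hg : g = 0 := by
      ext ⟨i, j⟩
      obtain ⟨N, hN⟩ : ∃ N, ∀ p ∈ g.support, p.1 < N := by
        obtain ⟨N, hN⟩ := (g.support.image Prod.fst).exists_le
        exact ⟨N + 1, fun p hp => Nat.lt_succ_of_le (hN _ (Finset.mem_image_of_mem _ hp))⟩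
      refine hvan N i j (by_contra fun hne => ?_)
      have := hN _ (Finsupp.mem_support_iff.2 hne)
      simp at this
    rw [hg, map_zero] at hfg
    exact Finsupp.mapDomain_injective hL (by rw [hfg, Finsupp.mapDomain_zero])
  · have hYX : π y * π x = π (ι (α v)) := by
      rw [← map_mul, ← sub_eq_zero]
      simpa [hζy] using hπζ
    have hpq : ∀ (p q : ℕ) a, ∃ (i : ℤ) (b : A),
        π (ι a) * (π y ^ p * π x ^ q) = π (ι b) * gwaMon (π x) (π y) i := by
      intro p
      induction p with
      | zero => intro q a; exact ⟨-q, a, by simp⟩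
      | succ p ih =>
        rintro (_ | q) a
        · exact ⟨(p + 1 : ℕ), a, by rw [gwaMon_natCast]; simp⟩
        · obtain ⟨i, b, hb⟩ := ih q (a * tw (α : A ≃+* A) (p : ℤ) (α v))
          refine ⟨i, b, ?_⟩
          have e : π y ^ p * π (ι (α v)) = π (ι (tw (α : A ≃+* A) (p : ℤ) (α v))) * π y ^ p := by
            simpa using congrArg π (hyn p (α v))
          rw [← hb, pow_succ, pow_succ', mul_assoc (π y ^ p), ← mul_assoc (π y), hYX,
            ← mul_assoc (π y ^ p), e]
          simp only [map_mul, mul_assoc]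
    intro q
    obtain ⟨r, rfl⟩ := hπsurj q
    obtain ⟨g, rfl⟩ : ∃ g, skewEv (ι : A →+* R) x y g = r := hR.free.2 r
    change ∃ f, gwaEv (π.comp (ι : A →+* R)) (π x) (π y) f = _
    induction g using Finsupp.induction_linear with
    | zero => exact ⟨0, by simp⟩
    | add f g hf hg =>
      obtain ⟨f', hf'⟩ := hf
      obtain ⟨g', hg'⟩ := hg
      exact ⟨f' + g', by simp only [map_add, hf', hg']⟩
    | single p a =>
      obtain ⟨i, b, hb⟩ := hpq p.1 p.2 a
      exact ⟨Finsupp.single i b, by simpa using hb.symm⟩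

end Quotient

/-- Corollary 3.15: if `(u + λ)A + α^m(u + λ)A` is maximal for some `m ≥ 1` while
`(u + λ)A + αⁿ(u + λ)A = A` for all positive `n ≠ m`, then `R/(z − λ)R` has a unique
nonzero prime two-sided ideal. -/
theorem stmt14 {K A R S Q : Type*} [Field K] [IsAlgClosed K]
    [Ring A] [Algebra K A] [IsDomain A] [Ring R] [Algebra K R] [Ring S] [Algebra K S]
    [Ring Q]
    (α : A ≃ₐ[K] A) (u : A) (hu : ∀ a : A, u * a = a * u)
    (huK : u ∉ Set.range (algebraMap K A))
    (ι : A →ₐ[K] R) (x y : R) (hR : IsAmbiskew α u ι x y)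
    -- the skew Laurent polynomial ring `A[y^{±1}; α]` is simple with centre `K`
    (ιS : A →ₐ[K] S) (yS : Sˣ) (hS : IsSkewLaurent α ιS yS)
    (hSsimple : IsSimpleRing S)
    (hScentre : ∀ s : S, (∀ w : S, s * w = w * s) → ∃ k : K, s = algebraMap K S k)
    -- the Casimir element `z = xy − u`
    (z : R) (hz : z = x * y - ι u)
    (lam : K) (m : ℕ) (hm : 1 ≤ m)
    -- `(u + λ)A + α^m(u + λ)A` is a maximal two-sided ideal of `A`
    (M : TwoSidedIdeal A)
    (hMcar : (M : Set A) = {a : A | ∃ b c : A,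
      a = (u + algebraMap K A lam) * b + (⇑α)^[m] (u + algebraMap K A lam) * c})
    (hMmax : IsMaximalTwoSided M)
    -- `(u + λ)A + αⁿ(u + λ)A = A` for all positive `n ≠ m`
    (hn : ∀ n : ℕ, 1 ≤ n → n ≠ m → ∀ a : A, ∃ b c : A,
      a = (u + algebraMap K A lam) * b + (⇑α)^[n] (u + algebraMap K A lam) * c)
    -- `Q = R/(z − λ)R` via the surjection `π` with kernel `(z − λ)R`
    (π : R →+* Q) (hπsurj : Function.Surjective π)
    (hπker : ∀ r : R, π r = 0 ↔ ∃ s : R, r = (z - algebraMap K R lam) * s) :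
    ∃! P : TwoSidedIdeal Q, P ≠ ⊥ ∧ IsPrimeTwoSided P := by
  have hgwa := hR.isGWA_quotient hz lam π hπsurj hπker
  set v := u + algebraMap K A lam with hv
  have hcen := hgwa.central
  have hv0 : v ≠ 0 := fun h0 =>
    huK ⟨-lam, by rw [map_neg]; exact (eq_neg_of_add_eq_zero_left h0).symm⟩
  have htw : ∀ (n : ℕ) a, tw (α : A ≃+* A) n a = (⇑α)^[n] a := fun n a => tw_natCast _ n a
  have hMem : ∀ a, a ∈ M ↔ ∃ b c, a = b * v + c * tw (α : A ≃+* A) m v := by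
    intro a
    have := Set.ext_iff.1 hMcar a
    rw [SetLike.mem_coe, Set.mem_ofPred_eq] at this
    rw [this]
    refine exists_congr fun b => exists_congr fun c => ?_
    rw [← htw, hcen, tw_central (α : A ≃+* A) hcen]
  have e : Exceptional (α : A ≃+* A) v M m := by
    refine ⟨fun n h1 h2 => ?_, fun a ha => (hMem a).1 ha, (hMem _).2 ⟨1, 0, by simp⟩,
      (hMem _).2 ⟨0, 1, by simp⟩⟩
    obtain ⟨b, c, hbc⟩ := hn n h1 h2 1
    refine ⟨b, c, ?_⟩
    rw [← htw, hcen, tw_central (α : A ≃+* A) hcen] at hbc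
    exact hbc
  have hXY : ∀ P : TwoSidedIdeal Q, P ≠ ⊥ → P ≠ ⊤ → π y ^ m ∈ P ∧ π x ^ m ∈ P := by
    intro P hbot htop
    obtain ⟨N, hN⟩ := hgwa.exists_Ypow_mem hS hv0 P hbot
    have hgwa' : IsGWA (α.symm : A ≃+* A) (α v) (π.comp (ι : A →+* R)) (π y) (π x) := hgwa.swap
    obtain ⟨N', hN'⟩ := hgwa'.exists_Ypow_mem hS.inv (by simpa using hv0) P hbot
    exact ⟨hgwa.Ypow_descent e.cop P htop N hN, hgwa.swap.Ypow_descent e.swap.cop P htop N' hN'⟩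
  have hmax : ∀ P : TwoSidedIdeal Q, P ≠ ⊥ → P ≠ ⊤ → P ≤ hgwa.JIdeal e := fun P h1 h2 =>
    hgwa.le_JIdeal e P hMmax (hXY P h1 h2).1 (hXY P h1 h2).2 h2
  have hJtop : hgwa.JIdeal e ≠ ⊤ := hgwa.JIdeal_ne_top e hm hMmax.1
  refine ⟨hgwa.JIdeal e, ⟨hgwa.JIdeal_ne_bot e, hJtop, fun I J hIJ => ?_⟩, ?_⟩
  · -- An ideal not contained in `J(M)` is the whole ring.
    by_contra! hcon
    have htop : ∀ I : TwoSidedIdeal Q, ¬ I ≤ hgwa.JIdeal e → (1 : Q) ∈ I := by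
      intro I hI
      rw [I.one_mem_iff]
      by_contra hne
      exact hI (hmax I (fun h0 => hI (h0 ▸ bot_le)) hne)
    have := hIJ 1 (htop I hcon.1) 1 (htop J hcon.2)
    rw [mul_one] at this
    exact hJtop ((hgwa.JIdeal e).one_mem_iff.1 this)
  · rintro P ⟨hbot, htop, -⟩
    refine le_antisymm (hmax P hbot htop) fun w hw => ?_
    obtain ⟨f, hf, rfl⟩ := mem_JSub.1 ((hgwa.mem_JIdeal e).1 hw)
    rw [gwaEv_apply]
    exact sum_mem fun i _ => hgwa.J_le e P (hXY P hbot htop).1 (hXY P hbot htop).2 (hf i)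
end
end

section
/- Let W = W(A, α, u) be a generalized Weyl algebra with u central and regular in A such that, for a fixed positive integer m, M := Au + Aα^m(u) satisfies: A/M is a simple right Ore domain, and Au + Aα^i(u) = A for all positive integers i ≠ m. For 0 ≤ r ≤ m−1 let J^{(r)} be the right ideal (M₀M₁⋯M_{r−1}M_{r+1}⋯M_{m−1}·W + J(M))/J(M) of W/J(M), where M_i = α^{−i}(M). Then the sum J^{(0)} + J^{(1)} + ⋯ + J^{(m−1)} of right ideals of W/J(M) is direct and equals W/J(M). -/
/-!
Write `M_i = α⁻ⁱ(M)` and `u_i = α⁻ⁱ(u)`, a central element of `M_i`.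

*The sum is everything.* For `i < j < m`, applying `α⁻ʲ` to `Au + Aα^{j-i}(u) = A` shows that `u_i`
and `u_j` are comaximal. Hence some combination of the products `∏_{i ≠ r} u_i` equals `1`
(`exists_sum_mul_prod_erase_eq_one`). Each such product lies in `∏_{i ≠ r} M_i`
(`prod_mem_listProdSet`), so `W` is the sum of the right ideals `(∏_{i ≠ r} M_i) W`.

*The sum is direct.* Taking graded coefficients is additive and left `A`-linear (`coeffEquiv`), so
the coefficients of an element `w_r` of `(∏_{i ≠ r} M_i) W` lie in every `M_ℓ` with `ℓ ≠ r`.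
Every component of `J(M)` is the intersection of the `M_ℓ` over some set of indices `ℓ < m`. If
`∑ w_r ∈ J(M)` and `ℓ` is one of the indices for degree `d`, the degree `d` coefficients of all
`w_s` with `s ≠ ℓ` lie in `M_ℓ`, and so does their sum with that of `w_ℓ`; hence the coefficient of
`w_ℓ` lies in `M_ℓ` too, and every `w_r` is in `J(M)`. Throughout, `M_ℓ` is handled as the
kernel of a ring homomorphism `A → A/M` (`exists_ringHom_ker`).
-/


noncomputable section

/-- The ideal `M = Au + Aα^m(u)` of notation 4.1, as a set. -/
def gwaMset {A : Type*} [Ring A] (α : A ≃+* A) (u : A) (m : ℕ) : Set A :=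
  genSet2 u ((⇑α)^[m] u)

/-- The graded ideal `J(M)` of `W`, as a set. -/
def gwaJM {A W : Type*} [Ring A] [Ring W] (α : A ≃+* A) (u : A) (ι : A →+* W)
    (X Y : W) (m : ℕ) : Set W :=
  gwaGradedSet ι X Y (Jcomp α (gwaMset α u m) m)

/-- The product `Π(M, 0, r̂, m−1) = M₀M₁⋯M_{r−1}M_{r+1}⋯M_{m−1}` of the ideals
`M_i = α^{−i}(M)` omitting the index `r`, as a set. -/
def gwaPr {A : Type*} [Ring A] (α : A ≃+* A) (u : A) (m r : ℕ) : Set A :=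
  listProdSet (((List.range m).filter (· ≠ r)).map fun i =>
    (⇑α.symm)^[i] '' gwaMset α u m)

/-- The right ideal `J^{(r)} = (Π(M, 0, r̂, m−1)·W + J(M))/J(M)` of `W/J(M)`, as a subset
of the quotient `Q` of `W` by `J(M)` (realized by the surjection `π`). -/
def gwaJr {A W Q : Type*} [Ring A] [Ring W] [Ring Q] (α : A ≃+* A) (u : A)
    (ι : A →+* W) (X Y : W) (π : W →+* Q) (m r : ℕ) : Set Q :=
  π '' {w : W | ∃ a ∈ {w' : W | ∃ (k : ℕ) (p : Fin k → A) (v : Fin k → W),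
      (∀ i, p i ∈ gwaPr α u m r) ∧ w' = ∑ i, ι (p i) * v i},
    ∃ b ∈ gwaJM α u ι X Y m, w = a + b}

/-! ### Comaximal central elements -/

/-- If a central element `z` is comaximal with each `v i`, `i ∈ s`, then it is comaximal with
their product. The coefficients are taken in `A`, not in its center. -/
theorem exists_comaximal_prod {A : Type*} [Ring A] (v : ℕ → Subring.center A)
    (z : Subring.center A) (s : Finset ℕ)
    (h : ∀ i ∈ s, ∃ b c : A, b * z + c * v i = 1) :
    ∃ b c : A, b * z + c * ((∏ i ∈ s, v i : Subring.center A) : A) = 1 := by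
  induction s using Finset.induction_on with
  | empty => exact ⟨0, 1, by simp⟩
  | insert k s hk ih =>
    obtain ⟨b, c, hbc⟩ := h k (Finset.mem_insert_self _ _)
    obtain ⟨b', c', hbc'⟩ := ih fun i hi => h i (Finset.mem_insert_of_mem hi)
    rw [Finset.prod_insert hk]
    generalize (∏ i ∈ s, v i : Subring.center A) = P at hbc' ⊢
    refine ⟨b + c * v k * b', c * c', ?_⟩
    have hk' : (v k : A) * c' = c' * v k := (Subring.mem_center_iff.1 (v k).2 c').symm
    calc (b + c * v k * b') * (z : A) + c * c' * ((v k * P : Subring.center A) : A)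
        = b * z + c * v k * (b' * z) + c * (c' * v k) * P := by push_cast; noncomm_ring
      _ = b * z + c * v k * (b' * z + c' * P) := by rw [← hk']; noncomm_ring
      _ = 1 := by rw [hbc', mul_one, hbc]

/-- For pairwise comaximal central elements, the products omitting one factor generate the unit
left ideal. -/
theorem exists_sum_mul_prod_erase_eq_one {A : Type*} [Ring A] (v : ℕ → Subring.center A)
    (s : Finset ℕ) (hs : s.Nonempty)
    (h : ∀ i ∈ s, ∀ j ∈ s, i ≠ j → ∃ b c : A, b * v i + c * v j = 1) :
    ∃ c : ℕ → A, ∑ r ∈ s, c r * ((∏ i ∈ s.erase r, v i : Subring.center A) : A) = 1 := by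
  induction hs using Finset.Nonempty.cons_induction with
  | singleton a => exact ⟨1, by simp⟩
  | cons k s hk hs ih =>
    rw [Finset.cons_eq_insert] at h ⊢
    obtain ⟨c, hc⟩ := ih fun i hi j hj =>
      h i (Finset.mem_insert_of_mem hi) j (Finset.mem_insert_of_mem hj)
    obtain ⟨b, e, hbe⟩ := exists_comaximal_prod v (v k) s fun i hi =>
      h k (Finset.mem_insert_self _ _) i (Finset.mem_insert_of_mem hi)
        (fun hki => hk (hki ▸ hi))
    refine ⟨fun r => if r = k then e else b * c r, ?_⟩
    rw [Finset.sum_insert hk, Finset.erase_insert hk]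
    beta_reduce
    rw [if_pos rfl]
    have key : ∀ r ∈ s, (if r = k then e else b * c r) *
        ((∏ i ∈ (insert k s).erase r, v i : Subring.center A) : A)
        = b * (c r * ((∏ i ∈ s.erase r, v i : Subring.center A) : A)) * v k := by
      intro r hr
      have hrk : k ≠ r := fun hkr => hk (hkr ▸ hr)
      rw [if_neg hrk.symm, Finset.erase_insert_of_ne hrk,
        Finset.prod_insert (fun hx => hk (Finset.mem_of_mem_erase hx)), mul_comm]
      push_cast
      noncomm_ring
    rw [Finset.sum_congr rfl key, ← Finset.sum_mul, ← Finset.mul_sum, hc, mul_one, add_comm, hbe]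

/-! ### Products and translates of ideals -/

theorem prod_mem_listProdSet {A : Type*} [Ring A] (S : ℕ → Set A) (v : ℕ → A)
    (h : ∀ i, v i ∈ S i) (l : List ℕ) : (l.map v).prod ∈ listProdSet (l.map S) := by
  induction l with
  | nil => exact Set.mem_univ _
  | cons a l ih =>
    exact ⟨1, fun _ => v a, fun _ => (l.map v).prod, fun _ => ⟨h a, ih⟩, by simp⟩

/-- A product of sets, one of which lies in the kernel of a ring homomorphism, lies in that
kernel. -/
theorem map_eq_zero_of_mem_listProdSet {A B : Type*} [Ring A] [Ring B] (φ : A →+* B)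
    (S : ℕ → Set A) (j : ℕ) (hφ : ∀ x ∈ S j, φ x = 0) (l : List ℕ) (hj : j ∈ l) :
    ∀ x ∈ listProdSet (l.map S), φ x = 0 := by
  induction l with
  | nil => simp at hj
  | cons a l ih =>
    rintro x ⟨n, f, g, hfg, rfl⟩
    rw [map_sum]
    refine Finset.sum_eq_zero fun i _ => ?_
    rw [map_mul]
    rcases List.mem_cons.1 hj with rfl | hj
    · rw [hφ _ (hfg i).1, zero_mul]
    · rw [ih hj _ (hfg i).2, mul_zero]

/-- The translate `α⁻ˡ(M)` of the kernel `M` of a ring homomorphism is again a kernel, namely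
that of its composite with `αˡ`. -/
theorem exists_ringHom_ker {A B : Type*} [Ring A] [Ring B] (α : A ≃+* A) (M : Set A)
    (φ : A →+* B) (hφ : ∀ a, φ a = 0 ↔ a ∈ M) (l : ℕ) :
    ∃ ψ : A →+* B, ∀ a, ψ a = 0 ↔ a ∈ (⇑α.symm)^[l] '' M := by
  induction l with
  | zero => exact ⟨φ, by simpa using hφ⟩
  | succ l ih =>
    obtain ⟨ψ, hψ⟩ := ih
    refine ⟨ψ.comp (α : A →+* A), fun a => ?_⟩
    rw [Function.iterate_succ', Set.image_comp]
    change ψ (α a) = 0 ↔ _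
    rw [hψ]
    constructor
    · exact fun h => ⟨α a, h, by simp⟩
    · rintro ⟨y, hy, rfl⟩
      simpa using hy

/-! ### Graded coefficients -/

/-- The additive isomorphism sending a finitely supported family of coefficients `(a_d)` to the
element `∑ a_d (monomial of degree d)` of the generalized Weyl algebra. -/
def coeffEquiv {A W : Type*} [Ring A] [Ring W] {α : A ≃+* A} {u : A} {ι : A →+* W} {X Y : W}
    (hW : IsGWA α u ι X Y) : (ℤ →₀ A) ≃+ W :=
  AddEquiv.mk' (Equiv.ofBijective _ hW.free) fun f g =>
    show (f + g).sum (fun d a => ι a * gwaMon X Y d)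
        = f.sum (fun d a => ι a * gwaMon X Y d) + g.sum (fun d a => ι a * gwaMon X Y d) from
      Finsupp.sum_add_index' (by simp) (by simp [add_mul])

theorem coeffEquiv_apply {A W : Type*} [Ring A] [Ring W] {α : A ≃+* A} {u : A} {ι : A →+* W}
    {X Y : W} (hW : IsGWA α u ι X Y) (f : ℤ →₀ A) :
    coeffEquiv hW f = f.sum fun d a => ι a * gwaMon X Y d := rfl

theorem coeffEquiv_symm_mul {A W : Type*} [Ring A] [Ring W] {α : A ≃+* A} {u : A} {ι : A →+* W}
    {X Y : W} (hW : IsGWA α u ι X Y) (a : A) (w : W) (d : ℤ) :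
    (coeffEquiv hW).symm (ι a * w) d = a * (coeffEquiv hW).symm w d := by
  obtain ⟨f, rfl⟩ := (coeffEquiv hW).surjective w
  have h : ι a * coeffEquiv hW f = coeffEquiv hW (a • f) := by
    rw [coeffEquiv_apply, coeffEquiv_apply, Finsupp.sum_smul_index (by simp), Finsupp.mul_sum]
    simp [mul_assoc]
  rw [h]
  simp

theorem mem_gwaGradedSet_iff {A W : Type*} [Ring A] [Ring W] {α : A ≃+* A} {u : A} {ι : A →+* W}
    {X Y : W} (hW : IsGWA α u ι X Y) (comp : ℤ → Set A) (w : W) :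
    w ∈ gwaGradedSet ι X Y comp ↔ ∀ d, (coeffEquiv hW).symm w d ∈ comp d := by
  constructor
  · rintro ⟨f, hf, rfl⟩
    rw [← coeffEquiv_apply hW]
    simpa using hf
  · exact fun h => ⟨_, h, by rw [← coeffEquiv_apply hW]; simp⟩

/-- Every component of `J(I)` is the intersection of the translates `α⁻ˡ(I)` over some set of
indices `l < m`, empty in the degrees of absolute value at least `m`. -/
theorem exists_mem_Jcomp_iff {A : Type*} [Ring A] (α : A ≃+* A) (I : Set A) (m : ℕ) (d : ℤ) :
    ∃ T : Set ℕ, (∀ l ∈ T, l < m) ∧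
      ∀ a, a ∈ Jcomp α I m d ↔ ∀ l ∈ T, a ∈ (⇑α.symm)^[l] '' I := by
  unfold Jcomp
  split_ifs with h1 h2
  · exact ⟨∅, by simp, by simp⟩
  · refine ⟨{l | l ∈ Finset.range (m - d.natAbs)}, fun l hl => ?_, fun a => ?_⟩
    · have := Finset.mem_range.1 hl
      omega
    · simp only [Set.mem_iInter, Set.mem_ofPred_eq]
  · refine ⟨{l | l ∈ Finset.Icc d.natAbs (m - 1)}, fun l hl => ?_, fun a => ?_⟩
    · have := Finset.mem_Icc.1 hl
      omega
    · simp only [Set.mem_iInter, Set.mem_ofPred_eq]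

/-! ### The translates of `u` -/

theorem iterate_symm_mem_center {A : Type*} [Ring A] (α : A ≃+* A) (u : A)
    (hu : ∀ a : A, u * a = a * u) (i : ℕ) : (⇑α.symm)^[i] u ∈ Subring.center A := by
  induction i with
  | zero => exact Subring.mem_center_iff.2 fun g => (hu g).symm
  | succ i ih =>
    rw [Function.iterate_succ_apply', Subring.mem_center_iff]
    intro g
    have := congrArg α.symm (Subring.mem_center_iff.1 ih (α g))
    simpa using this

/-- Applying `α⁻ʲ` to `Au + Aα^{j-i}(u) = A` makes `α⁻ʲ(u)` and `α⁻ⁱ(u)` comaximal. -/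
theorem exists_comaximal_iterate_symm {A : Type*} [Ring A] (α : A ≃+* A) (u : A) (m : ℕ)
    (h1 : ∀ i : ℕ, 1 ≤ i → i ≠ m → ∀ a : A, ∃ b c : A, a = b * u + c * (⇑α)^[i] u)
    (i j : ℕ) (hij : i < j) (hj : j < m) :
    ∃ b c : A, b * (⇑α.symm)^[j] u + c * (⇑α.symm)^[i] u = 1 := by
  obtain ⟨b, c, h⟩ := h1 (j - i) (by omega) (by omega) 1
  have h' := congrArg (⇑α.symm)^[j] h
  rw [iterate_map_add, iterate_map_mul, iterate_map_mul, iterate_map_one] at h'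
  have hs : (⇑α.symm)^[j] ((⇑α)^[j - i] u) = (⇑α.symm)^[i] u := by
    conv_lhs => enter [2]; rw [show j = i + (j - i) by omega]
    rw [Function.iterate_add_apply,
      (Function.LeftInverse.iterate α.symm_apply_apply (j - i)) u]
  rw [hs] at h'
  exact ⟨_, _, h'.symm⟩

/-- Lemma 4.6: the sum of the right ideals `J^{(0)}, …, J^{(m−1)}` of `W/J(M)` is direct
and equals `W/J(M)`. -/
theorem stmt16 {A W Q A₂ : Type*} [Ring A] [Ring W] [Ring Q] [Ring A₂]
    (α : A ≃+* A) (u : A) (ι : A →+* W) (X Y : W) (hW : IsGWA α u ι X Y)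
    (hureg : (∀ a : A, u * a = 0 → a = 0) ∧ (∀ a : A, a * u = 0 → a = 0))
    (m : ℕ) (hm : 1 ≤ m)
    -- `Au + Aαⁱ(u) = A` for all positive integers `i ≠ m`
    (h1 : ∀ i : ℕ, 1 ≤ i → i ≠ m → ∀ a : A, ∃ b c : A, a = b * u + c * (⇑α)^[i] u)
    -- `A/M` is a simple right Ore domain, where `M = Au + Aα^m(u)`
    (πA : A →+* A₂) (hπAsurj : Function.Surjective πA)
    (hπAker : ∀ a : A, πA a = 0 ↔ a ∈ gwaMset α u m)
    (hA₂simple : IsSimpleRing A₂)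
    (hA₂domain : ∀ a b : A₂, a * b = 0 → a = 0 ∨ b = 0)
    (hA₂ore : ∀ a b : A₂, a ≠ 0 → b ≠ 0 → ∃ c d : A₂, a * c = b * d ∧ a * c ≠ 0)
    -- `Q = W/J(M)` via the surjection `π` with kernel `J(M)`
    (π : W →+* Q) (hπsurj : Function.Surjective π)
    (hπker : ∀ w : W, π w = 0 ↔ w ∈ gwaJM α u ι X Y m) :
    -- the sum of the `J^{(r)}` equals `W/J(M)` ...
    (∀ q : Q, ∃ cf : Fin m → Q,
      (∀ r : Fin m, cf r ∈ gwaJr α u ι X Y π m r) ∧ q = ∑ r, cf r) ∧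
    -- ... and the sum is direct
    (∀ cf : Fin m → Q, (∀ r : Fin m, cf r ∈ gwaJr α u ι X Y π m r) →
      ∑ r, cf r = 0 → ∀ r : Fin m, cf r = 0) := by
  classical
  have hJr : ∀ (r : ℕ) (k : ℕ) (p : Fin k → A) (v : Fin k → W), (∀ i, p i ∈ gwaPr α u m r) →
      π (∑ i, ι (p i) * v i) ∈ gwaJr α u ι X Y π m r := fun r k p v hp =>
    ⟨_, ⟨_, ⟨k, p, v, hp, rfl⟩, 0, (hπker 0).1 (map_zero π), (add_zero _).symm⟩, rfl⟩
  constructor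
  · intro q
    obtain ⟨w, rfl⟩ := hπsurj q
    let v : ℕ → Subring.center A := fun i =>
      ⟨(⇑α.symm)^[i] u, iterate_symm_mem_center α u hW.central i⟩
    obtain ⟨c, hc⟩ := exists_sum_mul_prod_erase_eq_one v (Finset.range m)
      ⟨0, Finset.mem_range.2 hm⟩ (by
        intro i hi j hj hij
        rw [Finset.mem_range] at hi hj
        rcases lt_or_gt_of_ne hij with h | h
        · obtain ⟨b, c, hbc⟩ := exists_comaximal_iterate_symm α u m h1 i j h hj
          exact ⟨c, b, by rw [add_comm]; exact hbc⟩
        · exact exists_comaximal_iterate_symm α u m h1 j i h hi)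
    let P : ℕ → Subring.center A := fun r => ∏ i ∈ (Finset.range m).erase r, v i
    have hP : ∀ r, (P r : A) ∈ gwaPr α u m r := by
      intro r
      have hlist : (P r : A) =
          (((List.range m).filter (· ≠ r)).map fun i => (v i : A)).prod := by
        have hfin : (Finset.range m).erase r = ((List.range m).filter (· ≠ r)).toFinset := by
          ext i
          simp [and_comm]
        change ((∏ i ∈ (Finset.range m).erase r, v i : Subring.center A) : A) = _
        rw [hfin, List.prod_toFinset _ (List.nodup_range.filter _)]
        rw [← Subring.coe_subtype, map_list_prod, List.map_map]
        rfl
      rw [hlist]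
      refine prod_mem_listProdSet (fun i => (⇑α.symm)^[i] '' gwaMset α u m) _ (fun i => ?_) _
      exact ⟨u, ⟨1, 0, by simp⟩, rfl⟩
    refine ⟨fun r => π (∑ _i : Fin 1, ι (P r : A) * (ι (c r) * w)),
      fun r => hJr r 1 (fun _ => (P r : A)) (fun _ => ι (c r) * w) fun _ => hP r, ?_⟩
    have hterm : ∀ r, ι (P r : A) * (ι (c r) * w) = ι (c r * (P r : A)) * w := by
      intro r
      rw [← mul_assoc, ← map_mul, Subring.mem_center_iff.1 (P r).2 (c r)]
    simp only [Finset.univ_unique, Finset.sum_singleton, hterm]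
    rw [← map_sum, ← Finset.sum_mul, ← map_sum,
      Fin.sum_univ_eq_sum_range (fun r => c r * (P r : A)), hc, map_one, one_mul]
  · intro cf hcf hsum
    choose φ hφ using exists_ringHom_ker α (gwaMset α u m) πA hπAker
    have hex : ∀ r : Fin m, ∃ w : W, cf r = π w ∧
        ∀ l < m, l ≠ r → ∀ d, φ l ((coeffEquiv hW).symm w d) = 0 := by
      intro r
      obtain ⟨_, ⟨_, ⟨k, p, v, hp, rfl⟩, b, hb, rfl⟩, hw⟩ := hcf r
      refine ⟨∑ i, ι (p i) * v i, ?_, fun l hl hlr d => ?_⟩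
      · rw [← hw, map_add, (hπker b).2 hb, add_zero]
      · rw [map_sum, Finsupp.finsetSum_apply, map_sum]
        refine Finset.sum_eq_zero fun i _ => ?_
        rw [coeffEquiv_symm_mul, map_mul,
          map_eq_zero_of_mem_listProdSet (φ l) (fun i => (⇑α.symm)^[i] '' gwaMset α u m) l
            (fun x hx => (hφ l x).2 hx) _ (by simp [hl, hlr]) _ (hp i), zero_mul]
    choose w hw hwφ using hex
    have hmem : ∑ r, w r ∈ gwaJM α u ι X Y m := by
      rw [← hπker, map_sum, ← hsum]
      exact Finset.sum_congr rfl fun r _ => (hw r).symm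
    intro r
    rw [hw r, hπker]
    unfold gwaJM at hmem ⊢
    rw [mem_gwaGradedSet_iff hW] at hmem ⊢
    intro d
    obtain ⟨T, hTm, hT⟩ := exists_mem_Jcomp_iff α (gwaMset α u m) m d
    have hd := hmem d
    rw [hT] at hd ⊢
    intro l hl
    have hdl := hd l hl
    rw [← hφ] at hdl ⊢
    by_cases hlr : l = r
    · -- `φ l` kills all the other coefficients, so this one maps to the same value as the sum
      rw [map_sum, Finsupp.finsetSum_apply, map_sum, Finset.sum_eq_single r] at hdl
      · exact hdl
      · intro s _ hs
        exact hwφ s l (hTm l hl) (fun h => hs (Fin.ext (h.symm.trans hlr))) d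
      · simp
    · exact hwφ r l (hTm l hl) hlr d
end
end

section
/- Let W = W(A, α, u) be a generalized Weyl algebra with u central and regular in A such that, for a fixed positive integer m, M := Au + Aα^m(u) satisfies: A/M is a simple right Ore domain, and Au + Aα^i(u) = A for all positive integers i ≠ m. For 0 ≤ r ≤ m−1 let J^{(r)} be the right ideal (M₀M₁⋯M_{r−1}M_{r+1}⋯M_{m−1}·W + J(M))/J(M) of W/J(M), where M_i = α^{−i}(M). Then each J^{(r)} is a uniform right module over W/J(M): for any nonzero j₁, j₂ ∈ J^{(r)}, the right ideals j₁·(W/J(M)) and j₂·(W/J(M)) have nonzero intersection. -/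
/-!
Write `M_s = α^{-s}(M)`, the kernel of `φ_s : A → A/M`, `a ↦ α^s(a) + M`, and
`P = ⋂_{s < m, s ≠ r} M_s`. The coefficient ideal of `J(M)` in degree `d` is the intersection of
those `M_s` with `0 ≤ s < m` and `0 ≤ s + d < m`. Hence an element of `P` lies in it unless
`0 ≤ r + d < m`, and in that range exactly when `φ_r` kills it. So `J^{(r)}`, all of whose elements
have coefficients in `P`, lives in the degrees `-r, …, m - 1 - r`, and in each of them it embeds
in the domain `A/M_r`.

Given a nonzero `j ∈ J^{(r)}`, let `d` be the least degree in which it does not vanish. Right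
multiplication by `Y^(m-1-r-d)` sends that component to the top degree `N = m - 1 - r` and kills
all higher ones (`exists_top`). The shifted component does not vanish: moving `Y` past powers of `X`
only produces factors `α^{-s}(u)` with `0 ≤ s < r`, and these do not lie in `M_r`, because
`Au + Aα^{r-s}(u) = A` (`gwaMon_mul_Y_pow`). So `j·W` contains some `a Y^N` with `a ∈ P`,
`a ∉ M_r`. Two such elements `a Y^N`, `b Y^N` have a common nonzero right multiple because
`A/M_r ≅ A/M` is right Ore.
-/

noncomputable section

section Aux

variable {A W A₂ : Type*} [Ring A] [Ring W] [Ring A₂]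

/-- The ring homomorphism `a ↦ πA (α^s a)`. If `πA` has kernel `M`, its kernel is `α^{-s}(M)`. -/
def twist (πA : A →+* A₂) (α : A ≃+* A) (s : ℕ) : A →+* A₂ where
  toFun a := πA ((⇑α)^[s] a)
  map_one' := by simp [iterate_map_one]
  map_mul' a b := by simp [iterate_map_mul]
  map_zero' := by simp [iterate_map_zero]
  map_add' a b := by simp [iterate_map_add]

lemma twist_apply (πA : A →+* A₂) (α : A ≃+* A) (s : ℕ) (a : A) :
    twist πA α s a = πA ((⇑α)^[s] a) := rfl

lemma twist_eq_zero_iff {πA : A →+* A₂} {α : A ≃+* A} {M : Set A}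
    (hker : ∀ a : A, πA a = 0 ↔ a ∈ M) (s : ℕ) (a : A) :
    a ∈ (⇑α.symm)^[s] '' M ↔ twist πA α s a = 0 := by
  have hl : Function.LeftInverse (⇑α)^[s] (⇑α.symm)^[s] :=
    Function.LeftInverse.iterate α.apply_symm_apply s
  have hr : Function.LeftInverse (⇑α.symm)^[s] (⇑α)^[s] :=
    Function.LeftInverse.iterate α.symm_apply_apply s
  rw [twist_apply, hker]
  constructor
  · rintro ⟨b, hb, rfl⟩
    rwa [hl b]
  · intro h
    exact ⟨_, h, hr a⟩

lemma mem_Jcomp_iff {πA : A →+* A₂} {α : A ≃+* A} {M : Set A}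
    (hker : ∀ a : A, πA a = 0 ↔ a ∈ M) (m : ℕ) (d : ℤ) (a : A) :
    a ∈ Jcomp α M m d ↔
      ∀ s : ℕ, s < m → 0 ≤ (s : ℤ) + d → (s : ℤ) + d < m → twist πA α s a = 0 := by
  unfold Jcomp
  split_ifs with h₁ h₂
  · simp only [Set.mem_univ, true_iff]
    intro s hs h h'
    omega
  · simp only [Set.mem_iInter, twist_eq_zero_iff hker, Finset.mem_range]
    refine forall_congr' fun s => ⟨fun h _ _ _ => h (by omega), fun h _ => h ?_ ?_ ?_⟩ <;> omega
  · simp only [Set.mem_iInter, twist_eq_zero_iff hker, Finset.mem_Icc]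
    refine forall_congr' fun s => ⟨fun h _ _ _ => h (by omega), fun h _ => h ?_ ?_ ?_⟩ <;> omega

/-- An element of a product of the ideals `α^{-i}(M)` lies in each factor. -/
lemma twist_eq_zero_of_mem_listProdSet {πA : A →+* A₂} {α : A ≃+* A} {M : Set A}
    (hker : ∀ a : A, πA a = 0 ↔ a ∈ M) (l : List ℕ) (x : A)
    (hx : x ∈ listProdSet (l.map fun i => (⇑α.symm)^[i] '' M)) :
    ∀ s ∈ l, twist πA α s x = 0 := by
  induction l generalizing x with
  | nil => simp
  | cons i l ih =>
    obtain ⟨n, f, g, hfg, rfl⟩ := hx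
    intro s hs
    rw [map_sum]
    refine Finset.sum_eq_zero fun k _ => ?_
    rw [map_mul]
    rcases List.mem_cons.1 hs with rfl | hs
    · rw [(twist_eq_zero_iff hker s _).1 (hfg k).1, zero_mul]
    · rw [ih _ (hfg k).2 s hs, mul_zero]

variable {α : A ≃+* A} {u : A} {ι : A →+* W} {X Y : W}

lemma Xpow_mul (hW : IsGWA α u ι X Y) (i : ℕ) (a : A) :
    X ^ i * ι a = ι ((⇑α.symm)^[i] a) * X ^ i := by
  induction i generalizing a with
  | zero => simp
  | succ i ih =>
    rw [pow_succ, mul_assoc, hW.Xa, ← mul_assoc, ih, Function.iterate_succ_apply, mul_assoc]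

lemma Ypow_mul (hW : IsGWA α u ι X Y) (i : ℕ) (a : A) :
    Y ^ i * ι a = ι ((⇑α)^[i] a) * Y ^ i := by
  induction i generalizing a with
  | zero => simp
  | succ i ih =>
    rw [pow_succ, mul_assoc, hW.Ya, ← mul_assoc, ih, Function.iterate_succ_apply, mul_assoc]

/-- For `0 < t < m` the element `α^t(u)` does not lie in `M`, because `u` does and the two generate
the unit ideal. -/
lemma map_iterate_u_ne_zero [Nontrivial A₂] {πA : A →+* A₂} {m : ℕ}
    (hker : ∀ a : A, πA a = 0 ↔ a ∈ gwaMset α u m)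
    (h1 : ∀ i : ℕ, 1 ≤ i → i ≠ m → ∀ a : A, ∃ b c : A, a = b * u + c * (⇑α)^[i] u)
    {t : ℕ} (ht : 1 ≤ t) (htm : t < m) : πA ((⇑α)^[t] u) ≠ 0 := by
  intro h
  have hu : πA u = 0 := (hker u).2 ⟨1, 0, by simp⟩
  obtain ⟨b, c, hbc⟩ := h1 t ht htm.ne 1
  have := congrArg πA hbc
  simp [h, hu] at this

/-- Right multiplication by `Y` shifts a monomial up by one degree, up to a coefficient which is
not in `α^{-r}(M)` as long as the degree is at least `-r`. -/
lemma gwaMon_mul_Y [Nontrivial A₂] (hW : IsGWA α u ι X Y) {πA : A →+* A₂} {m : ℕ}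
    (hker : ∀ a : A, πA a = 0 ↔ a ∈ gwaMset α u m)
    (h1 : ∀ i : ℕ, 1 ≤ i → i ≠ m → ∀ a : A, ∃ b c : A, a = b * u + c * (⇑α)^[i] u)
    {r : ℕ} (hr : r < m) (d : ℤ) :
    ∃ c : A, gwaMon X Y d * Y = ι c * gwaMon X Y (d + 1) ∧
      (0 ≤ (r : ℤ) + d → twist πA α r c ≠ 0) := by
  rcases le_or_gt 0 d with hd | hd
  · refine ⟨1, ?_, fun _ => by simp⟩
    have : (d + 1).toNat = d.toNat + 1 := by omega
    simp [gwaMon, hd, show 0 ≤ d + 1 by omega, this, pow_succ]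
  · obtain ⟨i, rfl⟩ : ∃ i : ℕ, d = -((i : ℤ) + 1) := ⟨(-d - 1).toNat, by omega⟩
    have hmon : ∀ j : ℕ, gwaMon X Y (-(j : ℤ)) = X ^ j := by
      intro j
      unfold gwaMon
      split_ifs with h
      · obtain rfl : j = 0 := by omega
        simp
      · simp
    refine ⟨(⇑α.symm)^[i] u, ?_, fun h => ?_⟩
    · rw [show -((i : ℤ) + 1) + 1 = -(i : ℤ) by ring, hmon,
        show -((i : ℤ) + 1) = -((i + 1 : ℕ) : ℤ) by push_cast; ring, hmon,
        pow_succ, mul_assoc, hW.XY, Xpow_mul hW]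
    · have hl : (⇑α)^[i] ((⇑α.symm)^[i] u) = u :=
        Function.LeftInverse.iterate α.apply_symm_apply i u
      have hri : r = (r - i) + i := by omega
      rw [twist_apply, hri, Function.iterate_add_apply, hl]
      exact map_iterate_u_ne_zero hker h1 (by omega) (by omega)

lemma gwaMon_mul_Y_pow [Nontrivial A₂] (hW : IsGWA α u ι X Y) {πA : A →+* A₂} {m : ℕ}
    (hker : ∀ a : A, πA a = 0 ↔ a ∈ gwaMset α u m)
    (h1 : ∀ i : ℕ, 1 ≤ i → i ≠ m → ∀ a : A, ∃ b c : A, a = b * u + c * (⇑α)^[i] u)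
    (hdom : ∀ a b : A₂, a * b = 0 → a = 0 ∨ b = 0)
    {r : ℕ} (hr : r < m) (d : ℤ) (k : ℕ) :
    ∃ c : A, gwaMon X Y d * Y ^ k = ι c * gwaMon X Y (d + k) ∧
      (0 ≤ (r : ℤ) + d → twist πA α r c ≠ 0) := by
  induction k with
  | zero => exact ⟨1, by simp, fun _ => by simp⟩
  | succ k ih =>
    obtain ⟨c, hc, hc'⟩ := ih
    obtain ⟨e, he, he'⟩ := gwaMon_mul_Y hW hker h1 hr (d + k)
    refine ⟨c * e, ?_, fun h h0 => ?_⟩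
    · rw [pow_succ, ← mul_assoc, hc, mul_assoc, he, map_mul, mul_assoc]
      push_cast
      rw [add_assoc d]
    · rw [map_mul] at h0
      exact (hdom _ _ h0).elim (hc' h) (he' (by omega))

/-- The intersection of the ideals `α^{-s}(M)` with `s < m`, `s ≠ r`, where `M` is the kernel
of `πA`. -/
def inP (πA : A →+* A₂) (α : A ≃+* A) (m r : ℕ) (a : A) : Prop :=
  ∀ s : ℕ, s < m → s ≠ r → twist πA α s a = 0

lemma inP.mul_right {πA : A →+* A₂} {m r : ℕ} {a : A} (h : inP πA α m r a) (b : A) :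
    inP πA α m r (a * b) := fun s hs hsr => by rw [map_mul, h s hs hsr, zero_mul]

/-- The element of `W` with prescribed coefficients, as an additive map. -/
def gwaSum (ι : A →+* W) (X Y : W) : (ℤ →₀ A) →+ W :=
  Finsupp.liftAddHom fun d => (AddMonoidHom.mulRight (gwaMon X Y d)).comp ι.toAddMonoidHom

lemma gwaSum_apply (f : ℤ →₀ A) :
    gwaSum ι X Y f = f.sum fun d a => ι a * gwaMon X Y d := rfl

lemma gwaSum_single (d : ℤ) (a : A) :
    gwaSum ι X Y (Finsupp.single d a) = ι a * gwaMon X Y d := by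
  rw [gwaSum_apply, Finsupp.sum_single_index (by simp)]

lemma gwaSum_mem_iff (hW : IsGWA α u ι X Y) {comp : ℤ → Set A} (f : ℤ →₀ A) :
    gwaSum ι X Y f ∈ gwaGradedSet ι X Y comp ↔ ∀ d, f d ∈ comp d := by
  constructor
  · rintro ⟨g, hg, h⟩
    rwa [hW.free.1 (show _ = _ from h)]
  · exact fun h => ⟨f, h, rfl⟩

lemma monomial_mem_iff (hW : IsGWA α u ι X Y) {comp : ℤ → Set A} (h0 : ∀ d, (0 : A) ∈ comp d)
    (d : ℤ) (a : A) :
    ι a * gwaMon X Y d ∈ gwaGradedSet ι X Y comp ↔ a ∈ comp d := by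
  rw [← gwaSum_single, gwaSum_mem_iff hW]
  refine ⟨fun h => by simpa using h d, fun h e => ?_⟩
  rw [Finsupp.single_apply]
  split_ifs with hde
  · exact hde ▸ h
  · exact h0 e

/-- Every element of the right ideal `J^{(r)}` is represented by an element of `W` all of whose
coefficients lie in `⋂_{s ≠ r} α^{-s}(M)`. -/
lemma exists_rep {Q : Type*} [Ring Q] (hW : IsGWA α u ι X Y) {πA : A →+* A₂} {m : ℕ}
    (hker : ∀ a : A, πA a = 0 ↔ a ∈ gwaMset α u m)
    {π : W →+* Q} (hπker : ∀ w : W, π w = 0 ↔ w ∈ gwaJM α u ι X Y m) {r : ℕ}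
    {j : Q} (hj : j ∈ gwaJr α u ι X Y π m r) :
    ∃ f : ℤ →₀ A, (∀ d, inP πA α m r (f d)) ∧ j = π (gwaSum ι X Y f) := by
  obtain ⟨w, ⟨a, ⟨k, p, v, hp, rfl⟩, b, hb, rfl⟩, rfl⟩ := hj
  choose g hg using fun i => hW.free.2 (v i)
  refine ⟨∑ i, (g i).mapRange (fun a => p i * a) (mul_zero _), fun d s hs hsr => ?_, ?_⟩
  · rw [Finsupp.finsetSum_apply, map_sum]
    refine Finset.sum_eq_zero fun i _ => ?_
    have := twist_eq_zero_of_mem_listProdSet hker _ _ (hp i) s (by simp [hs, hsr])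
    simp [this]
  · rw [map_add, (hπker b).2 hb, add_zero, map_sum (gwaSum ι X Y)]
    congr 1
    refine Finset.sum_congr rfl fun i _ => ?_
    rw [gwaSum_apply, Finsupp.sum_mapRange_index (by simp), ← hg i]
    simp only [Finsupp.sum, Finset.mul_sum, map_mul, mul_assoc]

lemma mem_Jcomp_of_inP {πA : A →+* A₂} {m r : ℕ} {M : Set A} (hr : r < m)
    (hker : ∀ a : A, πA a = 0 ↔ a ∈ M) {a : A} (ha : inP πA α m r a) (d : ℤ) :
    a ∈ Jcomp α M m d ↔
      (0 ≤ (r : ℤ) + d → (r : ℤ) + d < m → twist πA α r a = 0) := by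
  rw [mem_Jcomp_iff hker]
  refine ⟨fun h => h r hr, fun h s hs h₁ h₂ => ?_⟩
  by_cases hsr : s = r
  · subst hsr
    exact h h₁ h₂
  · exact ha s hs hsr

/-- A nonzero element of `J^{(r)}` has a right multiple which is nonzero and homogeneous of the top
degree `m - 1 - r`. -/
lemma exists_top {Q : Type*} [Ring Q] [Nontrivial A₂] (hW : IsGWA α u ι X Y) {πA : A →+* A₂}
    {m : ℕ} (hker : ∀ a : A, πA a = 0 ↔ a ∈ gwaMset α u m)
    (h1 : ∀ i : ℕ, 1 ≤ i → i ≠ m → ∀ a : A, ∃ b c : A, a = b * u + c * (⇑α)^[i] u)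
    (hdom : ∀ a b : A₂, a * b = 0 → a = 0 ∨ b = 0)
    {π : W →+* Q} (hπker : ∀ w : W, π w = 0 ↔ w ∈ gwaJM α u ι X Y m) {r : ℕ} (hr : r < m)
    {j : Q} (hj : j ∈ gwaJr α u ι X Y π m r) (hj0 : j ≠ 0) :
    ∃ (q : Q) (a : A), inP πA α m r a ∧ twist πA α r a ≠ 0 ∧
      j * q = π (ι a * gwaMon X Y (m - 1 - r : ℤ)) := by
  obtain ⟨f, hf, rfl⟩ := exists_rep hW hker hπker hj
  have hmon : ∀ (d : ℤ) (a : A), inP πA α m r a →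
      (0 ≤ (r : ℤ) + d → (r : ℤ) + d < m → twist πA α r a = 0) →
      π (ι a * gwaMon X Y d) = 0 := by
    intro d a ha h
    rw [hπker]
    refine (monomial_mem_iff hW (fun e => ?_) d a).2 ((mem_Jcomp_of_inP hr hker ha d).2 h)
    exact (mem_Jcomp_iff hker m e 0).2 fun s _ _ _ => map_zero _
  have hex : ∃ d : ℤ, 0 ≤ (r : ℤ) + d ∧ (r : ℤ) + d < m ∧ twist πA α r (f d) ≠ 0 := by
    by_contra! hcon
    refine hj0 ((hπker _).2 ((gwaSum_mem_iff hW f).2 fun d => ?_))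
    exact (mem_Jcomp_of_inP hr hker (hf d) d).2 (hcon d)
  obtain ⟨d₀, ⟨hd₁, hd₂, hd₃⟩, hmin⟩ :=
    Int.exists_least_of_bdd (P := fun d : ℤ =>
      0 ≤ (r : ℤ) + d ∧ (r : ℤ) + d < m ∧ twist πA α r (f d) ≠ 0)
      ⟨-(r : ℤ), fun z hz => by have := hz.1; omega⟩ hex
  obtain ⟨k, hk⟩ : ∃ k : ℕ, (k : ℤ) = m - 1 - r - d₀ := ⟨(m - 1 - r - d₀ : ℤ).toNat, by omega⟩
  obtain ⟨c, hc, hc'⟩ := gwaMon_mul_Y_pow hW hker h1 hdom hr d₀ k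
  refine ⟨π (Y ^ k), f d₀ * c, (hf d₀).mul_right c, fun h0 => ?_, ?_⟩
  · rw [map_mul] at h0
    exact (hdom _ _ h0).elim hd₃ (hc' hd₁)
  · rw [← map_mul, gwaSum_apply, Finsupp.sum, Finset.sum_mul, map_sum,
      Finset.sum_eq_single d₀]
    · rw [mul_assoc, hc, ← mul_assoc, ← map_mul, show d₀ + k = (m - 1 - r : ℤ) by omega]
    · intro d _ hd
      rcases lt_or_gt_of_ne hd with hlt | hgt
      · -- Below `d₀` the coefficient already lies in `J(M)`.
        rw [map_mul, hmon d (f d) (hf d), zero_mul]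
        intro h₁ h₂
        by_contra h₃
        exact absurd (hmin d ⟨h₁, h₂, h₃⟩) (by omega)
      · -- Above `d₀` the shifted monomial has degree at least `m - r`.
        obtain ⟨e, he, -⟩ := gwaMon_mul_Y_pow hW hker h1 hdom hr d k
        rw [mul_assoc, he, ← mul_assoc, ← map_mul]
        refine hmon _ _ ((hf d).mul_right e) fun h₁ h₂ => ?_
        omega
    · intro h
      simp [Finsupp.notMem_support_iff.1 h]

end Aux

/-- Lemma 4.7: each right ideal `J^{(r)}` of `W/J(M)` is uniform: any two nonzero
elements `j₁, j₂ ∈ J^{(r)}` satisfy `j₁·(W/J(M)) ∩ j₂·(W/J(M)) ≠ 0`. -/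
theorem stmt17 {A W Q A₂ : Type*} [Ring A] [Ring W] [Ring Q] [Ring A₂]
    (α : A ≃+* A) (u : A) (ι : A →+* W) (X Y : W) (hW : IsGWA α u ι X Y)
    (hureg : (∀ a : A, u * a = 0 → a = 0) ∧ (∀ a : A, a * u = 0 → a = 0))
    (m : ℕ) (hm : 1 ≤ m)
    -- `Au + Aαⁱ(u) = A` for all positive integers `i ≠ m`
    (h1 : ∀ i : ℕ, 1 ≤ i → i ≠ m → ∀ a : A, ∃ b c : A, a = b * u + c * (⇑α)^[i] u)
    -- `A/M` is a simple right Ore domain, where `M = Au + Aα^m(u)`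
    (πA : A →+* A₂) (hπAsurj : Function.Surjective πA)
    (hπAker : ∀ a : A, πA a = 0 ↔ a ∈ gwaMset α u m)
    (hA₂simple : IsSimpleRing A₂)
    (hA₂domain : ∀ a b : A₂, a * b = 0 → a = 0 ∨ b = 0)
    (hA₂ore : ∀ a b : A₂, a ≠ 0 → b ≠ 0 → ∃ c d : A₂, a * c = b * d ∧ a * c ≠ 0)
    -- `Q = W/J(M)` via the surjection `π` with kernel `J(M)`
    (π : W →+* Q) (hπsurj : Function.Surjective π)
    (hπker : ∀ w : W, π w = 0 ↔ w ∈ gwaJM α u ι X Y m) :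
    ∀ r : ℕ, r < m →
      ∀ j₁ ∈ gwaJr α u ι X Y π m r, j₁ ≠ 0 →
      ∀ j₂ ∈ gwaJr α u ι X Y π m r, j₂ ≠ 0 →
        ∃ q₁ q₂ : Q, j₁ * q₁ = j₂ * q₂ ∧ j₁ * q₁ ≠ 0 := by
  have := hA₂simple
  have : Nontrivial A₂ := inferInstance
  intro r hr j₁ hj₁ hj₁0 j₂ hj₂ hj₂0
  obtain ⟨q₁, a, haP, ha0, hqa⟩ := exists_top hW hπAker h1 hA₂domain hπker hr hj₁ hj₁0
  obtain ⟨q₂, b, hbP, hb0, hqb⟩ := exists_top hW hπAker h1 hA₂domain hπker hr hj₂ hj₂0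
  obtain ⟨N, hN⟩ : ∃ N : ℕ, (N : ℤ) = m - 1 - r := ⟨m - 1 - r, by omega⟩
  have hY : gwaMon X Y (m - 1 - r : ℤ) = Y ^ N := by
    rw [← hN]
    simp [gwaMon]
  rw [hY] at hqa hqb
  obtain ⟨c₀, d₀, hcd, hne⟩ := hA₂ore _ _ ha0 hb0
  -- `c₀` and `d₀` are lifted along the surjection `x ↦ twist πA α r (α^N x)`.
  have hsurj : ∀ x : A₂, ∃ z : A, twist πA α r ((⇑α)^[N] z) = x := by
    intro x
    obtain ⟨y, rfl⟩ := hπAsurj x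
    refine ⟨(⇑α.symm)^[N] ((⇑α.symm)^[r] y), ?_⟩
    have hl : ∀ (n : ℕ) (z : A), (⇑α)^[n] ((⇑α.symm)^[n] z) = z := fun n =>
      Function.LeftInverse.iterate α.apply_symm_apply n
    rw [twist_apply, hl, hl]
  obtain ⟨c, rfl⟩ := hsurj c₀
  obtain ⟨d, rfl⟩ := hsurj d₀
  have hmem : ∀ x : A, inP πA α m r x → (π (ι x * Y ^ N) = 0 ↔ twist πA α r x = 0) := by
    intro x hx
    rw [hπker, ← hY, gwaJM, monomial_mem_iff hW, mem_Jcomp_of_inP hr hπAker hx]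
    · exact ⟨fun h => h (by omega) (by omega), fun h _ _ => h⟩
    · exact fun e => (mem_Jcomp_iff hπAker m e 0).2 fun s _ _ _ => map_zero _
  have hmul : ∀ x z : A, π (ι x * Y ^ N) * π (ι z) = π (ι (x * (⇑α)^[N] z) * Y ^ N) := by
    intro x z
    rw [← map_mul, mul_assoc, Ypow_mul hW, ← mul_assoc, ← map_mul]
  refine ⟨q₁ * π (ι c), q₂ * π (ι d), ?_, ?_⟩
  · rw [← mul_assoc, ← mul_assoc, hqa, hqb, hmul, hmul, ← sub_eq_zero, ← map_sub, ← sub_mul,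
      ← map_sub, hmem, map_sub, map_mul, map_mul, hcd, sub_self]
    intro s hs hsr
    rw [map_sub, haP.mul_right _ s hs hsr, hbP.mul_right _ s hs hsr, sub_self]
  · rw [← mul_assoc, hqa, hmul, Ne, hmem _ (haP.mul_right _), map_mul]
    exact hne
end
end
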